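/- arXiv:1504.04069 — 2 statements merged into one kernel-verified Lean document; each statement's English description precedes it below -/
import Mathlib

section
/- Let H_0 = K_4^{(1)} (the complete graph on 4 vertices with one edge removed) or H_0 = K_4, and for each m ≥ 0 let H_{m+1} be the graph obtained from H_m by attaching a cycle C_{n_{m+1}} with n_{m+1} ≥ 3 to H_m along any common edge (identifying one edge of the cycle with an edge of H_m). Then for all m ≥ 0: H_{H_m} = ℕ ∪ [2,∞), H_{H_m}^ψ = (−1+2ℕ) ∪ [2,∞), and H_{H_m}^φ = 2ℕ ∪ [2,∞). In particular, CE_H(H_m) = CE_H^ψ(H_m) = CE_H^φ(H_m) = 2 for all m ≥ 0. -/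
open Set Matrix

noncomputable section

/-- Entrywise power function `x ↦ x^α` on nonnegative reals, with the convention `0^α := 0`. -/
def powEnt (α x : ℝ) : ℝ := if x = 0 then 0 else x ^ α

/-- The odd extension `ψ_α(x) = sgn(x)|x|^α` of the power function, with `ψ_α(0) = 0`. -/
def psiF (α x : ℝ) : ℝ := Real.sign x * |x| ^ α

/-- The even extension `φ_α(x) = |x|^α` of the power function, with `φ_α(0) = 0`. -/
def phiF (α x : ℝ) : ℝ := if x = 0 then 0 else |x| ^ α

/-- `P_G(I)`: positive semidefinite matrices with entries in `I` and zeros outside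
the edge pattern of `G`. -/
def PsetG {V : Type*} [Fintype V] (G : SimpleGraph V) (I : Set ℝ) :
    Set (Matrix V V ℝ) :=
  {A | A.PosSemidef ∧ (∀ i j, A i j ∈ I) ∧ ∀ i j, i ≠ j → ¬ G.Adj i j → A i j = 0}

/-- `H_G`: the set of entrywise powers preserving `P_G([0,∞))`. -/
def HsetG {V : Type*} [Fintype V] (G : SimpleGraph V) : Set ℝ :=
  {α | ∀ A ∈ PsetG G (Ici (0 : ℝ)), A.map (powEnt α) ∈ PsetG G univ}

/-- `H_G^ψ`: the set of powers `α` such that `ψ_α` preserves `P_G(ℝ)`. -/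
def HsetPsi {V : Type*} [Fintype V] (G : SimpleGraph V) : Set ℝ :=
  {α | ∀ A ∈ PsetG G univ, A.map (psiF α) ∈ PsetG G univ}

/-- `H_G^φ`: the set of powers `α` such that `φ_α` preserves `P_G(ℝ)`. -/
def HsetPhi {V : Type*} [Fintype V] (G : SimpleGraph V) : Set ℝ :=
  {α | ∀ A ∈ PsetG G univ, A.map (phiF α) ∈ PsetG G univ}

/-- The set of which the critical exponent is the least element:
all `α` such that every `β ≥ α` lies in `H`. -/
def CEset (H : Set ℝ) : Set ℝ := {α | ∀ β, α ≤ β → β ∈ H}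

/-- The positive integers, as a set of reals. -/
def posNats : Set ℝ := {x | ∃ k : ℕ, 0 < k ∧ x = k}

/-- The odd positive integers `−1+2ℕ`, as a set of reals. -/
def oddNats : Set ℝ := {x | ∃ k : ℕ, 0 < k ∧ x = 2 * k - 1}

/-- The even positive integers `2ℕ`, as a set of reals. -/
def evenNats : Set ℝ := {x | ∃ k : ℕ, 0 < k ∧ x = 2 * k}

/-- `addPath G v₁ v₂ t`: the graph `G` together with an added path from `v₁` to `v₂` having
`t` new internal vertices (hence `t + 1` edges); for `t = 0` this adds the edge `v₁v₂`.
Thus `G_m(v₁,v₂)` of the paper is `addPath G v₁ v₂ (m−1)`. -/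
def addPath {V : Type*} (G : SimpleGraph V) (v₁ v₂ : V) (t : ℕ) :
    SimpleGraph (V ⊕ Fin t) :=
  SimpleGraph.fromRel (fun x y =>
    match x, y with
    | Sum.inl a, Sum.inl b => G.Adj a b ∨ (t = 0 ∧ a = v₁ ∧ b = v₂)
    | Sum.inl a, Sum.inr i => (a = v₁ ∧ (i : ℕ) = 0) ∨ (a = v₂ ∧ (i : ℕ) = t - 1)
    | Sum.inr i, Sum.inr j => (j : ℕ) = (i : ℕ) + 1
    | Sum.inr _, Sum.inl _ => False)

/-- Graphs obtained from `G₀` by repeatedly attaching a cycle `C_p` (`p ≥ 3`) along an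
existing edge `(a,b)`: the `p − 2` new vertices form a path from `a` to `b` which, together
with the edge `(a,b)`, forms the attached cycle. -/
inductive AttachCycles {V₀ : Type} (G₀ : SimpleGraph V₀) : ∀ {W : Type}, SimpleGraph W → Prop
  | base : AttachCycles G₀ G₀
  | attach : ∀ {W : Type} (G : SimpleGraph W) (a b : W) (p : ℕ),
      3 ≤ p → G.Adj a b → AttachCycles G₀ G → AttachCycles G₀ (addPath G a b (p - 2))

/-!
Eliminating a vertex `v` splits a positive semidefinite `A` as `P + R`, where `P` has rank one and
agrees with `A` on row and column `v`, and `R` is the padded Schur complement. The maps `ψ_α` and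
`φ_α` are multiplicative, so they send `P` to a positive semidefinite matrix.

Sufficiency of `α ≥ 2`: if `v` has only two neighbours, then `f[A] - f[P] - f[R]` is supported on
their `2 × 2` block, where it is positive semidefinite as soon as `f[-]` is superadditive on
positive semidefinite `2 × 2` matrices. Hence attaching cycles does not affect the exponents `α ≥ 2`
once they work for `K₄`. Superadditivity of `f[-]` in size `n`, and preservation of positivity in
size `n + 1`, both follow from monotonicity in size `n` (of `f'[-]` and of `f[-]`), by integrating
along segments and by eliminating a vertex; since `ψ_α' = α φ_{α-1}` and `φ_α' = α ψ_{α-1}`, an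
induction on the size gives all three for both families.

Necessity: every `H_m` contains `K₄^{(1)}`. Eliminating the two non-adjacent vertices of
`K₄^{(1)}` from the images of rank-two matrices leaves `2 × 2` matrices which force `2 ^ α ≥ 2`,
hence `α ≥ 1`, and `2 ^ α ≥ 2 + α` when `α > 1`. By Bernoulli's inequality `2 ^ α ≤ 2 α` for
`1 < α < 2`, so the latter rules these `α` out. A matrix with a negative entry forces `2 ^ α ≥ 4`
for `φ_α`.
-/

open Filter Topology
open scoped SimpleGraph

section PosSemidef

variable {U V : Type*}

lemma isHermitian_apply_comm {A : Matrix V V ℝ} (hA : A.IsHermitian) (i j : V) :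
    A i j = A j i := by
  simpa using hA.apply j i

lemma posSemidef_apply_eq_zero_of_diag_eq_zero [Finite V] {A : Matrix V V ℝ} (hA : A.PosSemidef)
    {v : V} (hv : A v v = 0) (j : V) : A v j = 0 := by
  classical
  have := Fintype.ofFinite V
  have hcol : A *ᵥ Pi.single v 1 = 0 :=
    (hA.dotProduct_mulVec_zero_iff (Pi.single v 1)).1 (by simp [hv])
  rw [isHermitian_apply_comm hA.isHermitian]
  simpa using congrFun hcol j

lemma posSemidef_of_tendsto {ι : Type*} {l : Filter ι} [l.NeBot] {N : ι → Matrix V V ℝ}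
    {M : Matrix V V ℝ} (hN : ∀ᶠ t in l, (N t).PosSemidef)
    (hlim : ∀ i j, Tendsto (fun t => N t i j) l (𝓝 (M i j))) : M.PosSemidef := by
  refine ⟨Matrix.IsHermitian.ext fun i j => ?_, fun x => ?_⟩
  · refine tendsto_nhds_unique ((hlim j i).congr' ?_) (hlim i j)
    filter_upwards [hN] with t ht using isHermitian_apply_comm ht.isHermitian j i
  · refine ge_of_tendsto (tendsto_finsetSum _ fun i _ => tendsto_finsetSum _ fun j _ =>
      ((hlim i j).const_mul _).mul_const _) ?_
    filter_upwards [hN] with t ht using ht.2 x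

lemma posSemidef_sub_of_hasDerivAt {N N' : ℝ → Matrix V V ℝ} {a b : ℝ} (hab : a ≤ b)
    (hN : ∀ t i j, HasDerivAt (fun t => N t i j) (N' t i j) t) (hherm : ∀ t, (N t).IsHermitian)
    (hN' : ∀ t ∈ Ioo a b, (N' t).PosSemidef) : (N b - N a).PosSemidef := by
  refine ⟨(hherm b).sub (hherm a), fun x => ?_⟩
  let q : Matrix V V ℝ → ℝ := fun M => x.sum fun i xi => x.sum fun j xj => star xi * M i j * xj
  have hq : ∀ t, HasDerivAt (fun t => q (N t)) (q (N' t)) t := fun t =>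
    HasDerivAt.fun_sum fun i _ => HasDerivAt.fun_sum fun j _ =>
      ((hN t i j).const_mul _).mul_const _
  have hmono : MonotoneOn (fun t => q (N t)) (Icc a b) := by
    refine monotoneOn_of_deriv_nonneg (convex_Icc a b)
      (fun t _ => (hq t).continuousAt.continuousWithinAt)
      (fun t _ => (hq t).differentiableAt.differentiableWithinAt) fun t ht => ?_
    rw [interior_Icc] at ht
    rw [(hq t).deriv]
    exact (hN' t ht).2 x
  have hle : q (N a) ≤ q (N b) := hmono (left_mem_Icc.2 hab) (right_mem_Icc.2 hab) hab
  simpa [q, mul_sub, sub_mul] using hle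

lemma posSemidef_of_submatrix [Finite V] {e : U → V} (he : Function.Injective e)
    {M : Matrix V V ℝ} (hsupp : ∀ u v, M u v ≠ 0 → u ∈ range e ∧ v ∈ range e)
    (h : (M.submatrix e e).PosSemidef) : M.PosSemidef := by
  classical
  have := Finite.of_injective e he
  have := Fintype.ofFinite U
  have := Fintype.ofFinite V
  let P : Matrix V U ℝ := (1 : Matrix V V ℝ).submatrix id e
  suffices hM : M = P * M.submatrix e e * Pᴴ by
    rw [hM]
    exact h.mul_mul_conjTranspose_same P
  ext u v
  by_cases huv : u ∈ range e ∧ v ∈ range e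
  · obtain ⟨⟨i, rfl⟩, ⟨j, rfl⟩⟩ := huv
    simp [P, Matrix.mul_apply, Matrix.one_apply, he.eq_iff]
  · have hzero : ∀ k l, P u k * M (e k) (e l) * P v l = 0 := by
      intro k l
      by_contra hne
      refine huv ⟨⟨k, ?_⟩, ⟨l, ?_⟩⟩ <;> by_contra h' <;> simp [P, Ne.symm h'] at hne
    rw [not_imp_comm.1 (hsupp u v) huv]
    simp [Matrix.mul_apply, Finset.sum_mul, hzero]

lemma exists_posSemidef_extension [Finite V] {e : U → V} (he : Function.Injective e)
    {A : Matrix U U ℝ} (hA : A.PosSemidef) :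
    ∃ B : Matrix V V ℝ, B.PosSemidef ∧ B.submatrix e e = A ∧
      ∀ u v, B u v ≠ 0 → u ∈ range e ∧ v ∈ range e := by
  let B : Matrix V V ℝ := fun u v =>
    Function.extend (Prod.map e e) (fun p : U × U => A p.1 p.2) 0 (u, v)
  have hsub : B.submatrix e e = A := by
    ext i j
    exact (he.prodMap he).extend_apply (fun p : U × U => A p.1 p.2) 0 (i, j)
  have hsupp : ∀ u v, B u v ≠ 0 → u ∈ range e ∧ v ∈ range e := by
    intro u v huv
    by_contra hne
    refine huv (Function.extend_apply' _ _ _ ?_)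
    rintro ⟨⟨i, j⟩, hij⟩
    obtain ⟨rfl, rfl⟩ := Prod.mk.inj hij
    exact hne ⟨⟨i, rfl⟩, ⟨j, rfl⟩⟩
  exact ⟨B, posSemidef_of_submatrix he hsupp (hsub ▸ hA), hsub, hsupp⟩

/-- The rank-one summand of `A` that shares its row and column at `v`, so that
`A - pivot A v` is the Schur complement of the entry `A v v`, padded by zeros; it is `0` when
`A v v = 0`, because of `x / 0 = 0`. -/
def pivot (A : Matrix V V ℝ) (v : V) : Matrix V V ℝ :=
  Matrix.of fun i j => A i v * A v j / A v v

lemma pivot_apply (A : Matrix V V ℝ) (v i j : V) : pivot A v i j = A i v * A v j / A v v := rfl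

lemma pivot_map (f : ℝ →*₀ ℝ) (A : Matrix V V ℝ) (v : V) :
    (pivot A v).map f = pivot (A.map f) v := by
  ext i j
  simp [pivot_apply]

lemma posSemidef_pivot [Finite V] {A : Matrix V V ℝ} (hA : A.IsHermitian) {v : V} (hv : 0 ≤ A v v) :
    (pivot A v).PosSemidef := by
  have h := (posSemidef_vecMulVec_self_star (fun i => A i v)).smul (inv_nonneg.2 hv)
  convert h using 1
  ext i j
  simp [pivot_apply, vecMulVec_apply, isHermitian_apply_comm hA v j, div_eq_inv_mul]

lemma pivot_apply_left [Finite V] {A : Matrix V V ℝ} (hA : A.PosSemidef) (v j : V) :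
    pivot A v v j = A v j := by
  rcases eq_or_ne (A v v) 0 with hv | hv
  · simp [pivot_apply, hv, posSemidef_apply_eq_zero_of_diag_eq_zero hA hv j]
  · simp [pivot_apply, hv]

lemma pivot_apply_right [Finite V] {A : Matrix V V ℝ} (hA : A.PosSemidef) (v i : V) :
    pivot A v i v = A i v := by
  rw [isHermitian_apply_comm hA.isHermitian i v, ← pivot_apply_left hA, pivot_apply, pivot_apply,
    isHermitian_apply_comm hA.isHermitian i v, mul_comm]

lemma ne_of_sub_pivot_apply_ne_zero [Finite V] {A : Matrix V V ℝ} (hA : A.PosSemidef) {v i j : V}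
    (hij : (A - pivot A v) i j ≠ 0) : i ≠ v ∧ j ≠ v := by
  constructor <;> rintro rfl <;> simp [pivot_apply_left hA, pivot_apply_right hA] at hij

lemma adj_of_pivot_apply_ne_zero {A : Matrix V V ℝ} (hA : A.IsHermitian) {G : SimpleGraph V}
    (hG : ∀ i j, i ≠ j → ¬G.Adj i j → A i j = 0) {v i j : V} (hi : i ≠ v) (hj : j ≠ v)
    (hij : pivot A v i j ≠ 0) : G.Adj v i ∧ G.Adj v j := by
  constructor <;> by_contra hadj
  · simp [pivot_apply, isHermitian_apply_comm hA i v, hG v i hi.symm hadj] at hij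
  · simp [pivot_apply, hG v j hj.symm hadj] at hij

lemma posSemidef_sub_pivot [Finite V] {A : Matrix V V ℝ} (hA : A.PosSemidef) (v : V) :
    (A - pivot A v).PosSemidef := by
  classical
  have := Fintype.ofFinite V
  let Q : Matrix V V ℝ := 1 - (A v v)⁻¹ • vecMulVec (Pi.single v 1) (A v)
  have hAQ : A * Q = A - pivot A v := by
    ext i j
    simp [Q, Matrix.mul_sub, mul_vecMulVec, vecMulVec_apply, pivot_apply]
    ring
  have hrow : Pi.single v 1 ᵥ* (A - pivot A v) = 0 := by
    ext j
    simp [pivot_apply_left hA]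
  have hQAQ : Qᴴ * A * Q = A - pivot A v := by
    rw [Matrix.mul_assoc, hAQ]
    simp [Q, Matrix.sub_mul, vecMulVec_mul, hrow]
  exact hQAQ ▸ hA.conjTranspose_mul_mul_same Q

end PosSemidef

section EntrywiseFunctions

variable {U V : Type*}

/-- `f[A]` is positive semidefinite for every `A ∈ P_G(I)`. This is membership in `H_G`, `H_G^ψ`
or `H_G^φ` for an arbitrary `f`; since it is only used with `f 0 = 0`, the zero pattern of `f[A]`
is not part of it. -/
def PreservesPSD (G : SimpleGraph V) (I : Set ℝ) (f : ℝ → ℝ) : Prop :=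
  ∀ A : Matrix V V ℝ, A.PosSemidef → (∀ i j, A i j ∈ I) →
    (∀ i j, i ≠ j → ¬G.Adj i j → A i j = 0) → (A.map f).PosSemidef

/-- `f[A + D] ≥ f[A]` in the Loewner order, for all positive semidefinite `A` and `D` indexed
by `U`: monotonicity of `f[-]` on positive semidefinite matrices. -/
def LoewnerMonotone (U : Type*) (f : ℝ → ℝ) : Prop :=
  ∀ A D : Matrix U U ℝ, A.PosSemidef → D.PosSemidef → ((A + D).map f - A.map f).PosSemidef

/-- `f[A + D] ≥ f[A] + f[D]` in the Loewner order, for all positive semidefinite `A` and `D`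
indexed by `U`. With `A` and `D` the two pieces of a Schur complement decomposition, this controls
the overlap when a vertex is eliminated. -/
def LoewnerSuperadditive (U : Type*) (f : ℝ → ℝ) : Prop :=
  ∀ A D : Matrix U U ℝ, A.PosSemidef → D.PosSemidef →
    ((A + D).map f - A.map f - D.map f).PosSemidef

lemma LoewnerMonotone.of_hasDerivAt {f f' : ℝ → ℝ} (hf : ∀ x, HasDerivAt f (f' x) x)
    (hf' : PreservesPSD (⊤ : SimpleGraph U) univ f') : LoewnerMonotone U f := by
  intro A D hA hD
  have hderiv : ∀ t i j, HasDerivAt (fun t : ℝ => ((A + t • D).map f) i j)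
      ((D ⊙ (A + t • D).map f') i j) t := by
    intro t i j
    have hline : HasDerivAt (fun t => A i j + t * D i j) (D i j) t := by
      simpa using ((hasDerivAt_id t).mul_const (D i j)).const_add (A i j)
    exact ((hf _).comp t hline).congr_deriv (mul_comm _ _)
  have hherm : ∀ t : ℝ, ((A + t • D).map f).IsHermitian := fun t =>
    (hA.isHermitian.add (hD.isHermitian.smul (IsSelfAdjoint.all t))).map f fun _ => rfl
  have hpos : ∀ t ∈ Ioo (0 : ℝ) 1, (D ⊙ (A + t • D).map f').PosSemidef := fun t ht =>
    hD.hadamard <| hf' _ (hA.add (hD.smul ht.1.le)) (fun _ _ => mem_univ _)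
      fun i j hij hadj => absurd ((SimpleGraph.top_adj i j).2 hij) hadj
  simpa using posSemidef_sub_of_hasDerivAt zero_le_one hderiv hherm hpos

lemma LoewnerSuperadditive.of_hasDerivAt {f f' : ℝ → ℝ} (hf0 : f 0 = 0)
    (hf : ∀ x, HasDerivAt f (f' x) x) (hf' : LoewnerMonotone U f') :
    LoewnerSuperadditive U f := by
  intro A D hA hD
  have hderiv : ∀ t i j,
      HasDerivAt (fun t : ℝ => ((t • D + A).map f - (t • D).map f) i j)
        ((D ⊙ ((t • D + A).map f' - (t • D).map f')) i j) t := by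
    intro t i j
    have hline : HasDerivAt (fun t => t * D i j) (D i j) t := by
      simpa using (hasDerivAt_id t).mul_const (D i j)
    refine (((hf _).comp t (hline.add_const (A i j))).sub ((hf _).comp t hline)).congr_deriv ?_
    simp only [hadamard_apply, Matrix.sub_apply, map_apply, Matrix.add_apply, Matrix.smul_apply,
      smul_eq_mul]
    ring
  have hherm : ∀ t : ℝ, ((t • D + A).map f - (t • D).map f).IsHermitian := fun t =>
    have htD := hD.isHermitian.smul (IsSelfAdjoint.all t)
    ((htD.add hA.isHermitian).map f fun _ => rfl).sub (htD.map f fun _ => rfl)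
  have hpos : ∀ t ∈ Ioo (0 : ℝ) 1, (D ⊙ ((t • D + A).map f' - (t • D).map f')).PosSemidef :=
    fun t ht => hD.hadamard (hf' _ _ (hD.smul ht.1.le) hA)
  have h := posSemidef_sub_of_hasDerivAt zero_le_one hderiv hherm hpos
  convert h using 1
  ext i j
  simp [hf0, add_comm (A i j), sub_right_comm]

lemma PreservesPSD.congr {G : SimpleGraph V} {I : Set ℝ} {f g : ℝ → ℝ} (h : PreservesPSD G I f)
    (hfg : EqOn f g I) : PreservesPSD G I g := by
  intro A hA hI hG
  rw [show A.map g = A.map f from Matrix.ext fun i j => (hfg (hI i j)).symm]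
  exact h A hA hI hG

lemma PreservesPSD.const_mul {G : SimpleGraph V} {I : Set ℝ} {f : ℝ → ℝ} {c : ℝ} (hc : 0 ≤ c)
    (h : PreservesPSD G I f) : PreservesPSD G I fun x => c * f x :=
  fun A hA hI hG => (h A hA hI hG).smul hc

lemma LoewnerMonotone.const_mul {f : ℝ → ℝ} {c : ℝ} (hc : 0 ≤ c) (h : LoewnerMonotone U f) :
    LoewnerMonotone U fun x => c * f x := by
  intro A D hA hD
  convert (h A D hA hD).smul hc using 1
  ext i j
  simp [mul_sub]

lemma LoewnerMonotone.of_unique [Unique U] {f : ℝ → ℝ} (hf : MonotoneOn f (Ici 0)) :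
    LoewnerMonotone U f := by
  intro A D hA hD
  have hle : f (A default default) ≤ f (A default default + D default default) :=
    hf hA.diag_nonneg (add_nonneg hA.diag_nonneg hD.diag_nonneg)
      (le_add_of_nonneg_right hD.diag_nonneg)
  have hdiag : (A + D).map f - A.map f = diagonal fun i => ((A + D).map f - A.map f) i i := by
    ext i j
    simp [Subsingleton.elim j i]
  rw [hdiag, posSemidef_diagonal_iff]
  simpa [Unique.forall_iff] using hle

lemma PreservesPSD.mono {G : SimpleGraph V} {I J : Set ℝ} {f : ℝ → ℝ} (h : PreservesPSD G J f)
    (hIJ : I ⊆ J) : PreservesPSD G I f :=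
  fun A hA hI => h A hA fun i j => hIJ (hI i j)

lemma PreservesPSD.of_isContained [Finite V] {H : SimpleGraph U} {G : SimpleGraph V} {I : Set ℝ}
    {f : ℝ → ℝ} (hI0 : (0 : ℝ) ∈ I) (hHG : H ⊑ G) (h : PreservesPSD G I f) :
    PreservesPSD H I f := by
  obtain ⟨e⟩ := hHG
  intro A hA hI hH
  obtain ⟨B, hB, rfl, hsupp⟩ := exists_posSemidef_extension e.injective hA
  refine (h B hB (fun u v => ?_) fun u v huv hadj => ?_).submatrix e
  · by_cases hBuv : B u v = 0
    · exact hBuv ▸ hI0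
    · obtain ⟨⟨i, rfl⟩, ⟨j, rfl⟩⟩ := hsupp u v hBuv
      exact hI i j
  · by_contra hBuv
    obtain ⟨⟨i, rfl⟩, ⟨j, rfl⟩⟩ := hsupp u v hBuv
    exact hBuv (hH i j (fun hij => huv (congrArg e hij)) fun hij => hadj (e.toHom.map_adj hij))

variable [Finite V] {f : ℝ →*₀ ℝ}

lemma map_nonneg_of_nonneg (f : ℝ →*₀ ℝ) {x : ℝ} (hx : 0 ≤ x) : 0 ≤ f x := by
  rw [← Real.mul_self_sqrt hx, map_mul]
  exact mul_self_nonneg _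

lemma posSemidef_pivot_map {A : Matrix V V ℝ} (hA : A.PosSemidef) (v : V) :
    ((pivot A v).map f).PosSemidef := by
  rw [pivot_map]
  exact posSemidef_pivot (hA.isHermitian.map f fun _ => rfl)
    (map_nonneg_of_nonneg f hA.diag_nonneg)

lemma LoewnerMonotone.posSemidef_map_sub_map {f : ℝ → ℝ} (hf : LoewnerMonotone U f) {e : U → V}
    (he : Function.Injective e) {P R : Matrix V V ℝ} (hP : P.PosSemidef) (hR : R.PosSemidef)
    (hsupp : ∀ i j, R i j ≠ 0 → i ∈ range e ∧ j ∈ range e) :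
    ((P + R).map f - P.map f).PosSemidef := by
  refine posSemidef_of_submatrix he (fun i j hij => hsupp i j fun h => ?_)
    (hf _ _ (hP.submatrix e) (hR.submatrix e))
  simp [h] at hij

lemma LoewnerSuperadditive.posSemidef_map_sub_map_sub_map {f : ℝ → ℝ} (hf0 : f 0 = 0)
    (hf : LoewnerSuperadditive U f) {e : U → V} (he : Function.Injective e)
    {P R : Matrix V V ℝ} (hP : P.PosSemidef) (hR : R.PosSemidef)
    (hsupp : ∀ i j, P i j ≠ 0 → R i j ≠ 0 → i ∈ range e ∧ j ∈ range e) :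
    ((P + R).map f - P.map f - R.map f).PosSemidef := by
  refine posSemidef_of_submatrix he (fun i j hij => hsupp i j (fun h => ?_) fun h => ?_)
    (hf _ _ (hP.submatrix e) (hR.submatrix e)) <;> simp [h, hf0] at hij

lemma PreservesPSD.posSemidef_map {H : SimpleGraph U} {f : ℝ → ℝ} (hf0 : f 0 = 0)
    (hH : PreservesPSD H univ f) {e : U → V} (he : Function.Injective e) {R : Matrix V V ℝ}
    (hR : R.PosSemidef) (hsupp : ∀ i j, R i j ≠ 0 → i ∈ range e ∧ j ∈ range e)
    (hpattern : ∀ i j, i ≠ j → ¬H.Adj i j → R (e i) (e j) = 0) : (R.map f).PosSemidef := by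
  refine posSemidef_of_submatrix he (fun i j hij => hsupp i j fun h => ?_)
    (hH _ (hR.submatrix e) (fun _ _ => mem_univ _) hpattern)
  simp [h, hf0] at hij

-- `f[A] = f[pivot A v] + (f[A] - f[pivot A v])`, and the second term vanishes at `v`.
lemma LoewnerMonotone.preservesPSD {e : U → V} {v : V} (he : Function.Injective e)
    (hrange : range e = {v}ᶜ) (hf : LoewnerMonotone U f) :
    PreservesPSD (⊤ : SimpleGraph V) univ f := by
  intro A hA _ _
  have hP : (pivot A v).PosSemidef := posSemidef_pivot hA.isHermitian hA.diag_nonneg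
  have hmono := hf.posSemidef_map_sub_map he hP (posSemidef_sub_pivot hA v)
    (hrange ▸ fun _ _ => ne_of_sub_pivot_apply_ne_zero hA)
  simpa using hmono.add (posSemidef_pivot_map (f := f) hA v)

-- Off `v`, `pivot A v` lives on the at most two neighbours of `v`, which `H` joins: so
-- `A - pivot A v` has pattern `H`, and only the `2 × 2` block on the neighbours mixes both terms.
lemma PreservesPSD.of_vertex_elimination {G : SimpleGraph V} {H : SimpleGraph U} {e : U → V}
    {v : V} {x y : U} (he : Function.Injective e) (hrange : range e = {v}ᶜ) (hxy : H.Adj x y)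
    (hnbr : ∀ u, G.Adj v u → u = e x ∨ u = e y) (hGH : G.comap e ≤ H)
    (hf : LoewnerSuperadditive (Fin 2) f) (hH : PreservesPSD H univ f) :
    PreservesPSD G univ f := by
  intro A hA _ hG
  have hP : (pivot A v).PosSemidef := posSemidef_pivot hA.isHermitian hA.diag_nonneg
  have hR : (A - pivot A v).PosSemidef := posSemidef_sub_pivot hA v
  have hPsupp : ∀ i j, i ≠ v → j ≠ v → pivot A v i j ≠ 0 →
      (i = e x ∨ i = e y) ∧ (j = e x ∨ j = e y) := fun i j hi hj hij =>
    (adj_of_pivot_apply_ne_zero hA.isHermitian hG hi hj hij).imp (hnbr i) (hnbr j)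
  have hRsupp : ∀ i j, (A - pivot A v) i j ≠ 0 → i ∈ range e ∧ j ∈ range e :=
    hrange ▸ fun _ _ => ne_of_sub_pivot_apply_ne_zero hA
  have hmapR : ((A - pivot A v).map f).PosSemidef := by
    refine hH.posSemidef_map (map_zero f) he hR hRsupp fun i j hij hadj => ?_
    have hev : ∀ k, e k ≠ v := fun k => hrange.le (mem_range_self k)
    have hAij : A (e i) (e j) = 0 := hG _ _ (he.ne hij) fun h => hadj (hGH h)
    have hPij : pivot A v (e i) (e j) = 0 := by
      by_contra h
      obtain ⟨hi, hj⟩ := hPsupp _ _ (hev i) (hev j) h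
      simp only [he.eq_iff] at hi hj
      rcases hi with rfl | rfl <;> rcases hj with rfl | rfl
      exacts [hij rfl, hadj hxy, hadj hxy.symm, hij rfl]
    simp [hAij, hPij]
  have hcross : ((pivot A v + (A - pivot A v)).map f - (pivot A v).map f -
      (A - pivot A v).map f).PosSemidef := by
    have hinj : Function.Injective ![e x, e y] := by
      simpa [Function.Injective, Fin.forall_fin_two, he.eq_iff] using ⟨hxy.ne, hxy.ne'⟩
    have hmem : ∀ i, i = e x ∨ i = e y → i ∈ range ![e x, e y] := by simp
    refine hf.posSemidef_map_sub_map_sub_map (map_zero f) hinj hP hR fun i j hPij hRij => ?_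
    obtain ⟨hi, hj⟩ := ne_of_sub_pivot_apply_ne_zero hA hRij
    exact (hPsupp i j hi hj hPij).imp (hmem i) (hmem j)
  convert (hcross.add (posSemidef_pivot_map (f := f) hA v)).add hmapR using 1
  simp only [add_sub_cancel]
  abel

end EntrywiseFunctions

section ExtendedPowers

lemma psiF_eq_sign_mul_phiF (α x : ℝ) : psiF α x = SignType.sign x * phiF α x := by
  rcases lt_trichotomy x 0 with hx | rfl | hx
  · simp [psiF, phiF, Real.sign_of_neg hx, hx, hx.ne]
  · simp [psiF]
  · simp [psiF, phiF, Real.sign_of_pos hx, hx, hx.ne']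

lemma phiF_mul (α x y : ℝ) : phiF α (x * y) = phiF α x * phiF α y := by
  by_cases hx : x = 0 <;> by_cases hy : y = 0 <;> simp [phiF, hx, hy, abs_mul, Real.mul_rpow]

/-- The odd extension `psiF α` or the even extension `phiF α` of the power function, bundled as a
multiplicative map. Differentiation exchanges the two parities, so both are treated at once. -/
def extPow (odd : Bool) (α : ℝ) : ℝ →*₀ ℝ where
  toFun := bif odd then psiF α else phiF α
  map_zero' := by cases odd <;> simp [psiF, phiF]
  map_one' := by cases odd <;> simp [psiF, phiF]
  map_mul' x y := by
    cases odd
    · exact phiF_mul α x y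
    · simp only [cond_true, psiF_eq_sign_mul_phiF, phiF_mul, sign_mul, SignType.coe_mul]
      ring

lemma extPow_true (α : ℝ) : ⇑(extPow true α) = psiF α := rfl

lemma extPow_false (α : ℝ) : ⇑(extPow false α) = phiF α := rfl

variable {odd : Bool} {α : ℝ}

lemma extPow_of_pos (odd : Bool) (α : ℝ) {x : ℝ} (hx : 0 < x) : extPow odd α x = x ^ α := by
  cases odd <;>
    simp [extPow_true, extPow_false, psiF, phiF, Real.sign_of_pos hx, hx.ne', abs_of_pos hx]

lemma extPow_of_nonneg (odd : Bool) (hα : 0 < α) {x : ℝ} (hx : 0 ≤ x) :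
    extPow odd α x = x ^ α := by
  rcases hx.eq_or_lt with rfl | hx
  · rw [map_zero, Real.zero_rpow hα.ne']
  · exact extPow_of_pos odd α hx

lemma abs_extPow (odd : Bool) (hα : 0 < α) (x : ℝ) : |extPow odd α x| = |x| ^ α := by
  have hsq : extPow odd α x ^ 2 = extPow odd α |x| ^ 2 := by
    rw [← map_pow, ← map_pow, sq_abs]
  rw [← abs_of_nonneg (Real.rpow_nonneg (abs_nonneg x) α),
    ← extPow_of_nonneg odd hα (abs_nonneg x)]
  exact sq_eq_sq_iff_abs_eq_abs _ _ |>.1 hsq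

lemma extPow_eq_mul_extPow_not (odd : Bool) (α x : ℝ) :
    extPow odd α x = x * extPow (!odd) (α - 1) x := by
  rcases eq_or_ne x 0 with rfl | hx
  · simp
  have habs : |x| ^ α = |x| * |x| ^ (α - 1) := by
    rw [Real.rpow_sub_one (abs_ne_zero.2 hx), mul_div_cancel₀ _ (abs_ne_zero.2 hx)]
  cases odd
  · simp only [Bool.not_false, extPow_true, extPow_false, psiF_eq_sign_mul_phiF]
    rw [← mul_assoc, self_mul_sign]
    simpa [phiF, hx] using habs
  · simp only [Bool.not_true, extPow_true, extPow_false, psiF_eq_sign_mul_phiF]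
    rw [show phiF α x = |x| * phiF (α - 1) x by simpa [phiF, hx] using habs, ← mul_assoc,
      sign_mul_abs]

lemma tendsto_extPow_zero (odd : Bool) (hα : 0 < α) : Tendsto (extPow odd α) (𝓝 0) (𝓝 0) := by
  rw [tendsto_zero_iff_abs_tendsto_zero]
  have h : Tendsto (fun x : ℝ => |x| ^ α) (𝓝 0) (𝓝 (|0| ^ α)) :=
    (continuous_abs.rpow_const fun _ => Or.inr hα.le).tendsto 0
  simpa [Function.comp_def, abs_extPow odd hα, Real.zero_rpow hα.ne'] using h

lemma hasDerivAt_extPow (odd : Bool) (hα : 1 < α) (x : ℝ) :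
    HasDerivAt (extPow odd α) (α * extPow (!odd) (α - 1) x) x := by
  rcases eq_or_ne x 0 with rfl | hx
  · rw [map_zero, mul_zero, hasDerivAt_iff_tendsto_slope]
    refine ((tendsto_extPow_zero (!odd) (sub_pos.2 hα)).mono_left nhdsWithin_le_nhds).congr' ?_
    filter_upwards [self_mem_nhdsWithin] with y hy
    rw [slope_def_field, map_zero, sub_zero, sub_zero, extPow_eq_mul_extPow_not odd,
      mul_div_cancel_left₀ _ hy]
  · have hone : HasDerivAt (extPow odd α) α 1 := by
      have h := Real.hasDerivAt_rpow_const (x := 1) (p := α) (Or.inl one_ne_zero)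
      rw [Real.one_rpow, mul_one] at h
      refine h.congr_of_eventuallyEq ?_
      filter_upwards [lt_mem_nhds one_pos] with y hy using extPow_of_pos odd α hy
    have hscale : ∀ y, extPow odd α x * extPow odd α (y / x) = extPow odd α y := fun y => by
      rw [← map_mul, mul_div_cancel₀ _ hx]
    have hdiv : HasDerivAt (fun y => y / x) (1 / x) x := (hasDerivAt_id x).div_const x
    have h := (HasDerivAt.comp x (by rwa [div_self hx]) hdiv).const_mul (extPow odd α x)
    simp only [Function.comp_apply, hscale] at h
    refine h.congr_deriv ?_
    rw [extPow_eq_mul_extPow_not odd]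
    field_simp

lemma continuous_extPow_exponent (odd : Bool) (x : ℝ) : Continuous fun α => extPow odd α x := by
  rcases eq_or_ne x 0 with rfl | hx
  · simpa using continuous_const
  have h : Continuous fun α : ℝ => |x| ^ α := Real.continuous_const_rpow (abs_ne_zero.2 hx)
  cases odd
  · simpa [extPow_false, phiF, hx] using h
  · simpa [extPow_true, psiF] using h.const_mul (Real.sign x)

end ExtendedPowers

section LoewnerPowers

variable {n : ℕ} {odd : Bool} {α : ℝ}

lemma posSemidef_of_forall_exponent_gt {U : Type*} {N : ℝ → Matrix U U ℝ}
    (hN : ∀ β > α, (N β).PosSemidef) (hcont : ∀ i j, Continuous fun β => N β i j) :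
    (N α).PosSemidef :=
  posSemidef_of_tendsto (l := 𝓝[>] α) (eventually_nhdsWithin_of_forall hN) fun i j =>
    ((hcont i j).tendsto α).mono_left nhdsWithin_le_nhds

lemma loewnerMonotone_extPow (hα : n < α) : LoewnerMonotone (Fin (n + 1)) (extPow odd α) := by
  induction n generalizing odd α with
  | zero =>
    rw [Nat.cast_zero] at hα
    refine LoewnerMonotone.of_unique (U := Fin 1) fun x hx y hy hxy => ?_
    rw [extPow_of_nonneg odd hα hx, extPow_of_nonneg odd hα hy]
    exact Real.rpow_le_rpow hx hxy hα.le
  | succ n ih =>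
    push_cast at hα
    have hα₁ : 1 < α := (le_add_of_nonneg_left n.cast_nonneg).trans_lt hα
    have hmono : LoewnerMonotone (Fin (n + 1)) (extPow (!odd) (α - 1)) :=
      ih (lt_sub_iff_add_lt.2 hα)
    exact .of_hasDerivAt (hasDerivAt_extPow odd hα₁) <|
      (hmono.preservesPSD (Fin.succ_injective _) (Fin.range_succ _)).const_mul
        (zero_le_one.trans hα₁.le)

lemma preservesPSD_top_extPow (hα : n ≤ α) :
    PreservesPSD (⊤ : SimpleGraph (Fin (n + 2))) univ (extPow odd α) := by
  intro A hA hI hG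
  refine posSemidef_of_forall_exponent_gt (N := fun β => A.map (extPow odd β)) (fun β hβ => ?_)
    fun i j => continuous_extPow_exponent odd (A i j)
  exact (loewnerMonotone_extPow (hα.trans_lt hβ)).preservesPSD (Fin.succ_injective _)
    (Fin.range_succ _) A hA hI hG

lemma loewnerSuperadditive_extPow (hα : n + 1 ≤ α) :
    LoewnerSuperadditive (Fin (n + 1)) (extPow odd α) := by
  intro A D hA hD
  refine posSemidef_of_forall_exponent_gt
    (N := fun β => (A + D).map (extPow odd β) - A.map (extPow odd β) - D.map (extPow odd β))
    (fun β hβ => ?_) fun i j => ((continuous_extPow_exponent odd _).sub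
      (continuous_extPow_exponent odd _)).sub (continuous_extPow_exponent odd _)
  have hnβ : n + 1 < β := hα.trans_lt hβ
  have hβ₁ : 1 < β := (le_add_of_nonneg_left n.cast_nonneg).trans_lt hnβ
  exact LoewnerSuperadditive.of_hasDerivAt (map_zero _) (hasDerivAt_extPow odd hβ₁)
    ((loewnerMonotone_extPow (lt_sub_iff_add_lt.2 hnβ)).const_mul (zero_le_one.trans hβ₁.le))
    A D hA hD

end LoewnerPowers

section AddPath

variable {W : Type*} {G : SimpleGraph W} {a b : W} {f : ℝ →*₀ ℝ}

lemma isContained_addPath (G : SimpleGraph W) (a b : W) (t : ℕ) : G ⊑ addPath G a b t := by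
  refine ⟨⟨⟨Sum.inl, fun {x y} hxy => ?_⟩, Sum.inl_injective⟩⟩
  simp [addPath, hxy, hxy.ne]

lemma addPath_succ_adj_inl_inl {t : ℕ} {x y : W} :
    (addPath G a b (t + 1)).Adj (Sum.inl x) (Sum.inl y) ↔ G.Adj x y := by
  simpa [addPath, G.adj_comm y x] using G.ne_of_adj

lemma addPath_succ_adj_inl_inr {t : ℕ} {x : W} {i : Fin (t + 1)} :
    (addPath G a b (t + 1)).Adj (Sum.inl x) (Sum.inr i) ↔
      (x = a ∧ i = 0) ∨ (x = b ∧ i = Fin.last t) := by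
  rw [Fin.ext_iff, Fin.ext_iff]
  simp [addPath]

lemma addPath_succ_adj_inr_inr {t : ℕ} {i j : Fin (t + 1)} :
    (addPath G a b (t + 1)).Adj (Sum.inr i) (Sum.inr j) ↔
      (j : ℕ) = i + 1 ∨ (i : ℕ) = j + 1 := by
  simp only [addPath, SimpleGraph.fromRel_adj, ne_eq, Sum.inr.injEq]
  grind

lemma preservesPSD_addPath_one [Finite W] (hab : G.Adj a b)
    (hf : LoewnerSuperadditive (Fin 2) f) (hG : PreservesPSD G univ f) :
    PreservesPSD (addPath G a b 1) univ f := by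
  refine .of_vertex_elimination (v := Sum.inr 0) Sum.inl_injective ?_ hab ?_ ?_ hf hG
  · ext (x | i)
    · simp
    · simp [Subsingleton.elim i 0]
  · rintro (x | i) hadj
    · simpa using (addPath_succ_adj_inl_inr.1 hadj.symm).imp And.left And.left
    · exact absurd (Subsingleton.elim 0 i) (by simpa using hadj.ne)
  · exact fun x y => addPath_succ_adj_inl_inl.1

lemma preservesPSD_addPath_succ_succ [Finite W] {t : ℕ}
    (hf : LoewnerSuperadditive (Fin 2) f) (hG : PreservesPSD (addPath G a b (t + 1)) univ f) :
    PreservesPSD (addPath G a b (t + 2)) univ f := by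
  have hadj : (addPath G a b (t + 1)).Adj (Sum.inl b) (Sum.inr (Fin.last t)) :=
    addPath_succ_adj_inl_inr.2 (Or.inr ⟨rfl, rfl⟩)
  refine .of_vertex_elimination (v := Sum.inr (Fin.last (t + 1)))
    (Function.Injective.sumMap Function.injective_id (Fin.castSucc_injective _)) ?_ hadj ?_ ?_
    hf hG
  · ext (x | i)
    · simp
    · cases i using Fin.lastCases <;> simp
  · rintro (x | i) h
    · left
      simpa using addPath_succ_adj_inl_inr.1 h.symm
    · right
      have hi : (i : ℕ) = t := by
        have := addPath_succ_adj_inr_inr.1 h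
        grind
      simp [Fin.ext_iff, hi]
  · rintro (x | i) (y | j) h
    · exact addPath_succ_adj_inl_inl.2 (addPath_succ_adj_inl_inl.1 h)
    · have hx : (addPath G a b (t + 2)).Adj (Sum.inl x) (Sum.inr j.castSucc) := h
      exact addPath_succ_adj_inl_inr.2 (Or.inl (by simpa using addPath_succ_adj_inl_inr.1 hx))
    · have hy : (addPath G a b (t + 2)).Adj (Sum.inl y) (Sum.inr i.castSucc) := h.symm
      exact .symm <|
        addPath_succ_adj_inl_inr.2 (Or.inl (by simpa using addPath_succ_adj_inl_inr.1 hy))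
    · have hij : (addPath G a b (t + 2)).Adj (Sum.inr i.castSucc) (Sum.inr j.castSucc) := h
      exact addPath_succ_adj_inr_inr.2 (by simpa using addPath_succ_adj_inr_inr.1 hij)

lemma preservesPSD_addPath_succ [Finite W] (hab : G.Adj a b)
    (hf : LoewnerSuperadditive (Fin 2) f) (hG : PreservesPSD G univ f) (t : ℕ) :
    PreservesPSD (addPath G a b (t + 1)) univ f := by
  induction t with
  | zero => exact preservesPSD_addPath_one hab hf hG
  | succ t ih => exact preservesPSD_addPath_succ_succ hf ih

end AddPath

section AttachCycles

variable {V₀ W : Type} {G₀ : SimpleGraph V₀} {G : SimpleGraph W}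

lemma AttachCycles.finite [Finite V₀] (h : AttachCycles G₀ G) : Finite W := by
  induction h with
  | base => assumption
  | attach _ _ _ _ _ _ _ ih => exact Finite.instSum

lemma AttachCycles.isContained (h : AttachCycles G₀ G) : G₀ ⊑ G := by
  induction h with
  | base => exact SimpleGraph.IsContained.rfl
  | attach G a b p _ _ _ ih => exact ih.trans (isContained_addPath G a b (p - 2))

lemma AttachCycles.preservesPSD [Finite V₀] {f : ℝ →*₀ ℝ}
    (hf : LoewnerSuperadditive (Fin 2) f) (hG₀ : PreservesPSD G₀ univ f)
    (h : AttachCycles G₀ G) : PreservesPSD G univ f := by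
  induction h with
  | base => exact hG₀
  | attach G a b p hp hab h ih =>
    have := h.finite
    obtain ⟨t, rfl⟩ := Nat.exists_eq_add_of_le' hp
    exact preservesPSD_addPath_succ hab hf ih t

end AttachCycles

section Necessity

/-- The graph `K₄^{(1)}`: the complete graph on four vertices without the edge joining `0`
and `3`. The necessary conditions on the exponents all come from it. -/
def almostK4 : SimpleGraph (Fin 4) := (⊤ : SimpleGraph (Fin 4)).deleteEdges {s(0, 3)}

lemma not_almostK4_adj_iff {i j : Fin 4} (hij : i ≠ j) :
    ¬almostK4.Adj i j ↔ (i = 0 ∧ j = 3) ∨ (i = 3 ∧ j = 0) := by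
  revert i j
  simp only [almostK4, SimpleGraph.deleteEdges_adj, SimpleGraph.top_adj, mem_singleton_iff]
  decide

lemma almostK4_isContained_deleteEdges {a b : Fin 4} (hab : a ≠ b) :
    almostK4 ⊑ (⊤ : SimpleGraph (Fin 4)).deleteEdges {s(a, b)} := by
  obtain ⟨σ, rfl, rfl⟩ : ∃ σ : Equiv.Perm (Fin 4), σ 0 = a ∧ σ 3 = b := by
    revert a b
    decide
  refine ⟨⟨⟨σ, fun {i j} hij => ?_⟩, σ.injective⟩⟩
  simpa [almostK4] using hij

lemma almostK4_isContained {H : SimpleGraph (Fin 4)}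
    (hH : H = ⊤ ∨ ∃ a b, a ≠ b ∧ H = (⊤ : SimpleGraph (Fin 4)).deleteEdges {s(a, b)}) :
    almostK4 ⊑ H := by
  rcases hH with rfl | ⟨a, b, hab, rfl⟩
  · exact .of_le le_top
  · exact almostK4_isContained_deleteEdges hab

variable {S : Subsemiring ℝ} {f : ℝ →*₀ ℝ}

-- Eliminating `0` and then `3` from `f[p pᵀ + q qᵀ]` leaves this matrix, for `p = (1, u, 0)` and
-- `q = (0, w, 1)`.
lemma PreservesPSD.posSemidef_of_almostK4 (hf : PreservesPSD almostK4 S f) {u w : Fin 2 → ℝ}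
    (hu : ∀ i, u i ∈ S) (hw : ∀ i, w i ∈ S) :
    (Matrix.of fun i j =>
      f (u i * u j + w i * w j) - f (u i * u j) - f (w i * w j)).PosSemidef := by
  let p : Fin 4 → ℝ := ![1, u 0, u 1, 0]
  let q : Fin 4 → ℝ := ![0, w 0, w 1, 1]
  let A : Matrix (Fin 4) (Fin 4) ℝ := vecMulVec p p + vecMulVec q q
  have hp : ∀ i, p i ∈ S := by simp [p, Fin.forall_fin_succ, hu, S.zero_mem, S.one_mem]
  have hq : ∀ i, q i ∈ S := by simp [q, Fin.forall_fin_succ, hw, S.zero_mem, S.one_mem]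
  have hA : A.PosSemidef :=
    (posSemidef_vecMulVec_self_star p).add (posSemidef_vecMulVec_self_star q)
  have hB : (A.map f).PosSemidef := by
    refine hf A hA (fun i j => S.add_mem (S.mul_mem (hp i) (hp j)) (S.mul_mem (hq i) (hq j)))
      fun i j hij hadj => ?_
    rcases (not_almostK4_adj_iff hij).1 hadj with ⟨rfl, rfl⟩ | ⟨rfl, rfl⟩ <;>
      simp [A, p, q]
  have hC := posSemidef_sub_pivot (posSemidef_sub_pivot hB 0) 3
  convert hC.submatrix ![1, 2] using 1
  ext i j
  fin_cases i <;> fin_cases j <;> simp [A, p, q, pivot_apply]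

lemma sq_apply_le_mul_diag {M : Matrix (Fin 2) (Fin 2) ℝ} (hM : M.PosSemidef) :
    M 0 1 ^ 2 ≤ M 0 0 * M 1 1 := by
  have hdet := hM.det_nonneg
  rw [det_fin_two, isHermitian_apply_comm hM.isHermitian 1 0] at hdet
  linarith [sq (M 0 1)]

lemma PreservesPSD.two_le_apply_two (hf : PreservesPSD almostK4 S f) : 2 ≤ f 2 := by
  have hM := hf.posSemidef_of_almostK4 (u := 1) (w := 1) (fun _ => S.one_mem) fun _ => S.one_mem
  have h : 0 ≤ f 2 - 1 - 1 := by simpa [one_add_one_eq_two] using hM.diag_nonneg (i := 0)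
  linarith

lemma PreservesPSD.four_le_apply_two (hf : PreservesPSD almostK4 univ f)
    (hneg : f (-1) = 1) : 4 ≤ f 2 := by
  have hM := PreservesPSD.posSemidef_of_almostK4 (S := ⊤) (u := ![1, 1]) (w := ![1, -1]) hf
    (fun _ => mem_univ _) fun _ => mem_univ _
  have h₂ : 2 ≤ f 2 := PreservesPSD.two_le_apply_two (S := ⊤) hf
  have hdet : (-1 - 1) ^ 2 ≤ (f 2 - 1 - 1) ^ 2 := by
    simpa [one_add_one_eq_two, hneg, ← sq] using sq_apply_le_mul_diag hM
  nlinarith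

-- For `u = (1, 1)` and `w = (1, x)` the determinant condition is `g x ^ 2 ≤ (f 2 - 2) * g (x ^ 2)`;
-- divide by `x ^ 2` and let `x → 0⁺`.
lemma PreservesPSD.sq_le_mul_of_hasDerivAt (hf : PreservesPSD almostK4 (Ici 0) f) {c : ℝ}
    (hf₀ : HasDerivAt f 0 0) (hf₁ : HasDerivAt f c 1) : c ^ 2 ≤ (f 2 - 2) * c := by
  let g : ℝ → ℝ := fun x => f (1 + x) - 1 - f x
  have hg₀ : g 0 = 0 := by simp [g]
  have hg : HasDerivAt g c 0 := by
    have hshift : HasDerivAt (fun x => f (1 + x)) c 0 :=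
      HasDerivAt.comp_const_add 1 0 (by simpa using hf₁)
    exact ((hshift.sub_const 1).sub hf₀).congr_deriv (sub_zero c)
  have hslope : Tendsto (fun x => g x / x) (𝓝[>] 0) (𝓝 c) := by
    have h := hg.tendsto_slope.mono_left (nhdsWithin_mono 0 fun x (hx : x ∈ Ioi 0) => ne_of_gt hx)
    simpa [slope_fun_def_field, hg₀] using h
  have hsq : Tendsto (fun x : ℝ => x ^ 2) (𝓝[>] 0) (𝓝[>] 0) := by
    refine tendsto_nhdsWithin_iff.2 ⟨?_, ?_⟩
    · exact ((continuous_pow 2).tendsto' 0 0 (by simp)).mono_left nhdsWithin_le_nhds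
    · filter_upwards [self_mem_nhdsWithin] with x (hx : 0 < x) using pow_pos hx 2
  refine le_of_tendsto_of_tendsto (hslope.pow 2) ((hslope.comp hsq).const_mul (f 2 - 2)) ?_
  filter_upwards [self_mem_nhdsWithin] with x (hx : 0 < x)
  have hM := PreservesPSD.posSemidef_of_almostK4 (S := Subsemiring.nonneg ℝ) (u := ![1, 1])
    (w := ![1, x]) hf (by simp [Fin.forall_fin_two]) (by simp [Fin.forall_fin_two, hx.le])
  have h : g x ^ 2 ≤ (f 2 - 2) * g (x ^ 2) := by
    have h := sq_apply_le_mul_diag hM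
    have hentry : f 2 - 1 - 1 = f 2 - 2 := by ring
    simpa [g, sq, one_add_one_eq_two, hentry] using h
  rw [Function.comp_apply, div_pow, ← mul_div_assoc]
  gcongr

variable {odd : Bool} {α : ℝ}

lemma eq_one_or_two_le_of_preservesPSD_extPow
    (h : PreservesPSD almostK4 (Ici 0) (extPow odd α)) : α = 1 ∨ 2 ≤ α := by
  have h₂ : extPow odd α 2 = 2 ^ α := extPow_of_pos odd α two_pos
  have hα₁ : 1 ≤ α := by
    have htwo : (2 : ℝ) ^ (1 : ℝ) ≤ 2 ^ α := by
      simpa [h₂] using PreservesPSD.two_le_apply_two (S := Subsemiring.nonneg ℝ) h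
    exact (Real.rpow_le_rpow_left_iff one_lt_two).1 htwo
  by_contra! hα
  have hα₁' : 1 < α := lt_of_le_of_ne hα₁ hα.1.symm
  have hsq := h.sq_le_mul_of_hasDerivAt (c := α)
    (by simpa using hasDerivAt_extPow odd hα₁' 0) (by simpa using hasDerivAt_extPow odd hα₁' 1)
  have hlower : 2 + α ≤ 2 ^ α := by
    rw [h₂] at hsq
    nlinarith
  have hupper : (2 : ℝ) ^ α ≤ 2 * α := by
    have h := rpow_one_add_le_one_add_mul_self (s := 1) (p := α - 1) (by norm_num)
      (sub_nonneg.2 hα₁) (by linarith)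
    rw [one_add_one_eq_two, Real.rpow_sub_one two_ne_zero] at h
    linarith
  linarith

lemma two_le_of_preservesPSD_extPow_false
    (h : PreservesPSD almostK4 univ (extPow false α)) : 2 ≤ α := by
  have h₄ : 4 ≤ extPow false α 2 := h.four_le_apply_two (by simp [extPow_false, phiF])
  rw [extPow_of_pos false α two_pos, show (4 : ℝ) = 2 ^ (2 : ℝ) by norm_num] at h₄
  exact (Real.rpow_le_rpow_left_iff one_lt_two).1 h₄

end Necessity

section ExponentSets

variable {W : Type*} {G : SimpleGraph W} {α : ℝ}

lemma eqOn_powEnt_extPow (odd : Bool) (α : ℝ) : EqOn (powEnt α) (extPow odd α) (Ici 0) := by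
  intro x (hx : 0 ≤ x)
  rcases hx.eq_or_lt with rfl | hx
  · simp [powEnt]
  · rw [extPow_of_pos odd α hx, powEnt, if_neg hx.ne']

lemma extPow_true_one : ⇑(extPow true 1) = id := by
  funext x
  rw [extPow_true, psiF_eq_sign_mul_phiF]
  rcases eq_or_ne x 0 with rfl | hx
  · simp
  · simp [phiF, hx]

lemma preservesPSD_extPow_true_one : PreservesPSD G univ (extPow true 1) :=
  fun A hA _ _ => by rwa [extPow_true_one, Matrix.map_id]

section MemIff

variable [Fintype W]

lemma forall_map_mem_PsetG_iff {I : Set ℝ} {f : ℝ → ℝ} (hf : f 0 = 0) :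
    (∀ A ∈ PsetG G I, A.map f ∈ PsetG G univ) ↔ PreservesPSD G I f := by
  refine ⟨fun h A hA hI hG => (h A ⟨hA, hI, hG⟩).1, fun h A hA => ?_⟩
  obtain ⟨hA, hI, hG⟩ := hA
  exact ⟨h A hA hI hG, fun _ _ => mem_univ _,
    fun i j hij hadj => by rw [map_apply, hG i j hij hadj, hf]⟩

lemma mem_HsetG_iff (odd : Bool) : α ∈ HsetG G ↔ PreservesPSD G (Ici 0) (extPow odd α) :=
  have hpow := eqOn_powEnt_extPow odd α
  (forall_map_mem_PsetG_iff (f := powEnt α) (if_pos rfl)).trans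
    ⟨fun h => h.congr hpow, fun h => h.congr hpow.symm⟩

lemma mem_HsetPsi_iff : α ∈ HsetPsi G ↔ PreservesPSD G univ (extPow true α) :=
  forall_map_mem_PsetG_iff (map_zero (extPow true α))

lemma mem_HsetPhi_iff : α ∈ HsetPhi G ↔ PreservesPSD G univ (extPow false α) :=
  forall_map_mem_PsetG_iff (map_zero (extPow false α))

lemma HsetG_eq_insert (hK : almostK4 ⊑ G)
    (hG : ∀ α : ℝ, 2 ≤ α → PreservesPSD G univ (extPow true α)) :
    HsetG G = insert 1 (Ici 2) := by
  ext α
  rw [mem_HsetG_iff true]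
  refine ⟨fun h => eq_one_or_two_le_of_preservesPSD_extPow (h.of_isContained self_mem_Ici hK), ?_⟩
  rintro (rfl | hα)
  · exact preservesPSD_extPow_true_one.mono (subset_univ _)
  · exact (hG α hα).mono (subset_univ _)

lemma HsetPsi_eq_insert (hK : almostK4 ⊑ G)
    (hG : ∀ α : ℝ, 2 ≤ α → PreservesPSD G univ (extPow true α)) :
    HsetPsi G = insert 1 (Ici 2) := by
  ext α
  rw [mem_HsetPsi_iff]
  refine ⟨fun h => ?_, ?_⟩
  · exact eq_one_or_two_le_of_preservesPSD_extPow
      ((h.of_isContained (mem_univ 0) hK).mono (subset_univ _))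
  · rintro (rfl | hα)
    exacts [preservesPSD_extPow_true_one, hG α hα]

lemma HsetPhi_eq_Ici (hK : almostK4 ⊑ G)
    (hG : ∀ α : ℝ, 2 ≤ α → PreservesPSD G univ (extPow false α)) :
    HsetPhi G = Ici 2 := by
  ext α
  rw [mem_HsetPhi_iff]
  exact ⟨fun h => two_le_of_preservesPSD_extPow_false (h.of_isContained (mem_univ 0) hK), hG α⟩

end MemIff

lemma posNats_union_Ici_two : posNats ∪ Ici 2 = insert 1 (Ici 2) := by
  refine Subset.antisymm (union_subset ?_ ?_) (insert_subset ?_ subset_union_right)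
  · rintro _ ⟨k, hk, rfl⟩
    rcases (Nat.succ_le_of_lt hk).eq_or_lt with rfl | hk
    · simp
    · exact Or.inr (mem_Ici.2 (Nat.ofNat_le_cast.2 hk))
  · exact subset_insert _ _
  · exact Or.inl ⟨1, one_pos, by simp⟩

lemma oddNats_union_Ici_two : oddNats ∪ Ici 2 = insert 1 (Ici 2) := by
  refine Subset.antisymm ?_ (insert_subset ?_ subset_union_right)
  · rw [← posNats_union_Ici_two]
    refine union_subset_union_left _ ?_
    rintro _ ⟨k, hk, rfl⟩
    exact ⟨2 * k - 1, by omega, by push_cast [show 1 ≤ 2 * k by omega]; ring⟩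
  · exact Or.inl ⟨1, one_pos, by norm_num⟩

lemma evenNats_union_Ici_two : evenNats ∪ Ici 2 = Ici 2 := by
  refine union_eq_right.2 ?_
  rintro _ ⟨k, hk, rfl⟩
  have hk' : (1 : ℝ) ≤ k := by exact_mod_cast hk
  simpa using hk'

lemma isLeast_CEset {H : Set ℝ} {a c : ℝ} (ha : Ici a ⊆ H) (hH : H ⊆ insert c (Ici a)) :
    IsLeast (CEset H) a := by
  refine ⟨fun β hβ => ha hβ, fun b hb => ?_⟩
  by_contra! hba
  have hc : ∀ x, b ≤ x → x < a → x = c := fun x hbx hxa =>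
    (hH (hb x hbx)).resolve_right hxa.not_ge
  obtain ⟨x, hbx, hxa⟩ := exists_between hba
  exact hbx.ne ((hc b le_rfl hba).trans (hc x hbx.le hxa).symm)

end ExponentSets

/-- **Proposition 4.9**: if `H₀ = K_4` or `K_4^{(1)}` and `H_m` is obtained from `H₀` by
repeatedly attaching cycles along common edges, then `H_{H_m} = ℕ ∪ [2,∞)`,
`H^ψ_{H_m} = (−1+2ℕ) ∪ [2,∞)`, `H^φ_{H_m} = 2ℕ ∪ [2,∞)`; in particular all three critical
exponents equal `2`. -/
theorem Hsets_cycle_attachments (H₀ : SimpleGraph (Fin 4))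
    (hH₀ : H₀ = (⊤ : SimpleGraph (Fin 4)) ∨
      ∃ a b : Fin 4, a ≠ b ∧ H₀ = (⊤ : SimpleGraph (Fin 4)).deleteEdges {s(a, b)})
    {W : Type} [Fintype W] [DecidableEq W] (G : SimpleGraph W)
    (hbuilt : AttachCycles H₀ G) :
    HsetG G = posNats ∪ Ici (2 : ℝ) ∧
    HsetPsi G = oddNats ∪ Ici (2 : ℝ) ∧
    HsetPhi G = evenNats ∪ Ici (2 : ℝ) ∧
    IsLeast (CEset (HsetG G)) 2 ∧
    IsLeast (CEset (HsetPsi G)) 2 ∧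
    IsLeast (CEset (HsetPhi G)) 2 := by
  have hK : almostK4 ⊑ G := (almostK4_isContained hH₀).trans hbuilt.isContained
  have hpres : ∀ (odd : Bool) (α : ℝ), 2 ≤ α → PreservesPSD G univ (extPow odd α) := by
    intro odd α hα
    have hbase : PreservesPSD H₀ univ (extPow odd α) :=
      (preservesPSD_top_extPow (n := 2) (by exact_mod_cast hα)).of_isContained (mem_univ 0)
        (.of_le le_top)
    exact hbuilt.preservesPSD (loewnerSuperadditive_extPow (n := 1) (by norm_num [hα])) hbase
  have hG : HsetG G = insert 1 (Ici 2) := HsetG_eq_insert hK (hpres true)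
  have hPsi : HsetPsi G = insert 1 (Ici 2) := HsetPsi_eq_insert hK (hpres true)
  have hPhi : HsetPhi G = Ici 2 := HsetPhi_eq_Ici hK (hpres false)
  refine ⟨hG.trans posNats_union_Ici_two.symm, hPsi.trans oddNats_union_Ici_two.symm,
    hPhi.trans evenNats_union_Ici_two.symm, ?_, ?_, ?_⟩
  · exact isLeast_CEset (hG.ge.trans' (subset_insert _ _)) hG.le
  · exact isLeast_CEset (hPsi.ge.trans' (subset_insert _ _)) hPsi.le
  · exact isLeast_CEset hPhi.ge (hPhi.le.trans (subset_insert 1 _))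
end
end

section
/- Let G_1,…,G_k (with k > 1) be connected finite simple graphs, each having at least one edge, and let G be any coalescence of G_1,…,G_k, i.e., a connected graph obtained from their disjoint union by repeatedly identifying a single vertex of one component with a single vertex of another. Let f : ℝ → ℝ with f(0) = 0. Then f[−] preserves positivity on P_G(ℝ) if and only if: (1) f[−] preserves positivity on each P_{G_i}(ℝ), and (2) f is continuous and super-additive on [0,∞), i.e., f(x+y) ≥ f(x) + f(y) for all x, y ≥ 0. In particular, for any α ∈ ℝ, the power function ψ_α (respectively φ_α) preserves positivity on P_G(ℝ) if and only if it does so on P_{G_i}(ℝ) for all 1 ≤ i ≤ k and α ≥ 1; equivalently, H_G^ψ = [1,∞) ∩ ⋂_{i=1}^k H_{G_i}^ψ and H_G^φ = [1,∞) ∩ ⋂_{i=1}^k H_{G_i}^φ. -/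
open Set Matrix

noncomputable section

/-!
Think of a positive semidefinite matrix on `G` as a Gram matrix. If `G` is the union of `G₁` and
`G₂` meeting at a single vertex `v`, projecting the Gram vectors orthogonally onto the span of
those belonging to `G₁ - v` splits the matrix into a positive semidefinite matrix on `G₁` and one
on `G₂`, overlapping only in the diagonal entry at `v`; super-additivity of `f` absorbs the
overlap. The vertex count of a coalescence allows its blocks to be added one at a time, each
meeting the union of the previous ones at a single vertex.

Conversely, a coalescence contains a path on three vertices. Sums of two rank-one matrices on that
path force `f` to be super-additive, and rank-one matrices on an edge give
`f (s * t) ^ 2 ≤ f (s ^ 2) * f (t ^ 2)`, which rules out jumps of the increasing function `f`.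
-/

section PosSemidef

section Gram

open scoped ComplexOrder MatrixOrder InnerProductSpace

variable {𝕜 n : Type*} [RCLike 𝕜]

lemma exists_gram_eq_of_posSemidef [Fintype n] {A : Matrix n n 𝕜} (hA : A.PosSemidef) :
    ∃ v : n → EuclideanSpace 𝕜 n, gram 𝕜 v = A := by
  classical
  obtain ⟨M, rfl⟩ := CStarAlgebra.nonneg_iff_eq_star_mul_self.1 hA.nonneg
  refine ⟨fun j => WithLp.toLp 2 (M.col j), ?_⟩
  ext i j
  simp [PiLp.inner_apply, mul_apply, star_apply, mul_comm]

lemma exists_posSemidef_add_of_posSemidef [Finite n] {A : Matrix n n 𝕜} (hA : A.PosSemidef)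
    (T : Set n) :
    ∃ B C : Matrix n n 𝕜, B.PosSemidef ∧ C.PosSemidef ∧ B + C = A ∧
      (∀ i ∈ T, ∀ j, B i j = A i j) ∧ ∀ j, (∀ i ∈ T, A i j = 0) → ∀ i, B i j = 0 := by
  cases nonempty_fintype n
  obtain ⟨v, rfl⟩ := exists_gram_eq_of_posSemidef hA
  set U := Submodule.span 𝕜 (v '' T)
  have inner_proj (i j) : ⟪U.starProjection (v i), U.starProjection (v j)⟫_𝕜 =
      ⟪U.starProjection (v i), v j⟫_𝕜 := by
    rw [← U.inner_starProjection_left_eq_right, U.starProjection_eq_self_iff.2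
      (U.starProjection_apply_mem _)]
  refine ⟨gram 𝕜 fun i => U.starProjection (v i), gram 𝕜 fun i => v i - U.starProjection (v i),
    posSemidef_gram 𝕜 _, posSemidef_gram 𝕜 _, ?_, fun i hi j => ?_, fun j hj i => ?_⟩
  · ext i j
    have : ⟪v i, U.starProjection (v j)⟫_𝕜 = ⟪U.starProjection (v i), v j⟫_𝕜 :=
      (U.inner_starProjection_left_eq_right _ _).symm
    simp [inner_sub_left, inner_sub_right, inner_proj, this]
  · have hvi : U.starProjection (v i) = v i :=
      U.starProjection_eq_self_iff.2 (Submodule.subset_span (mem_image_of_mem v hi))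
    rw [gram_apply, inner_proj, hvi, gram_apply]
  · have hvj : v j ∈ Uᗮ := by
      have hU : U ≤ (𝕜 ∙ v j)ᗮ := Submodule.span_le.2 (by
        rintro _ ⟨i, hi, rfl⟩
        exact Submodule.mem_orthogonal_singleton_iff_inner_left.2 (hj i hi))
      exact fun u hu => Submodule.mem_orthogonal_singleton_iff_inner_left.1 (hU hu)
    rw [gram_apply, U.starProjection_apply_eq_zero_iff.2 hvj, inner_zero_right]

end Gram

lemma posSemidef_of_offDiag_eq_of_diag_le {R n : Type*} [Ring R] [PartialOrder R] [StarRing R]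
    [StarOrderedRing R] {A B : Matrix n n R} (hB : B.PosSemidef)
    (hoff : ∀ i j, i ≠ j → A i j = B i j) (hdiag : ∀ i, B i i ≤ A i i) : A.PosSemidef := by
  classical
  have hA : A = B + diagonal fun i => A i i - B i i := by
    ext i j
    rcases eq_or_ne i j with rfl | hij
    · simp
    · simp [hij, hoff i j hij]
  rw [hA]
  exact hB.add (PosSemidef.diagonal fun i => sub_nonneg.2 (hdiag i))

lemma exists_posSemidef_extension_s18 {R m n : Type*} [Ring R] [PartialOrder R] [StarRing R]
    [Finite m] [Finite n] (e : m ↪ n) {M : Matrix m m R} (hM : M.PosSemidef) :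
    ∃ A : Matrix n n R, A.PosSemidef ∧ A.submatrix e e = M ∧
      ∀ i j, A i j ≠ 0 → i ∈ range e ∧ j ∈ range e := by
  classical
  cases nonempty_fintype m
  cases nonempty_fintype n
  let E : Matrix m n R := of fun x i => if e x = i then 1 else 0
  have hE (i j) : (Eᴴ * M * E) i j = ∑ y, ∑ x, if e x = i ∧ e y = j then M x y else 0 := by
    simp only [E, mul_apply, conjTranspose_apply, of_apply, Finset.sum_mul]
    refine Finset.sum_congr rfl fun y _ => Finset.sum_congr rfl fun x _ => ?_
    by_cases hx : e x = i <;> by_cases hy : e y = j <;> simp [hx, hy]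
  refine ⟨Eᴴ * M * E, hM.conjTranspose_mul_mul_same E, ?_, ?_⟩
  · ext x y
    simp [hE, ite_and]
  · intro i j hij
    rw [hE] at hij
    obtain ⟨y, -, hy⟩ := Finset.exists_ne_zero_of_sum_ne_zero hij
    obtain ⟨x, -, hx⟩ := Finset.exists_ne_zero_of_sum_ne_zero hy
    obtain ⟨hxi, hyj⟩ := (ite_ne_right_iff.1 hx).1
    exact ⟨⟨x, hxi⟩, y, hyj⟩

end PosSemidef

section Graph

open SimpleGraph

variable {V κ : Type*} {G : SimpleGraph V}

lemma pathGraph_three_isContained [Fintype V] (hG : G.Connected) (hV : 2 < Fintype.card V) :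
    pathGraph 3 ⊑ G := by
  classical
  obtain ⟨u⟩ := hG.nonempty
  have : Nontrivial V := Fintype.one_lt_card_iff_nontrivial.1 (by omega)
  obtain ⟨v, huv⟩ := hG.preconnected.exists_adj_of_nontrivial u
  obtain ⟨w, hw⟩ : ∃ w, w ∉ ({u, v} : Finset V) := by
    by_contra! h
    exact hV.not_ge ((Finset.card_le_card fun x _ => h x).trans Finset.card_le_two)
  obtain ⟨p⟩ := hG.preconnected u w
  obtain ⟨d, -, hd₁, hd₂⟩ := p.exists_boundary_dart {u, v} (by simp) (by simpa using hw)
  simp only [mem_insert_iff, mem_singleton_iff, not_or] at hd₁ hd₂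
  have path {a b c : V} (hac : a ≠ c) (hab : G.Adj a b) (hbc : G.Adj b c) : pathGraph 3 ⊑ G :=
    Walk.IsPath.isContained_pathGraph (w := .cons hab (.cons hbc .nil))
      (by simp [hab.ne, hbc.ne, hac])
  rcases hd₁ with h | h
  · exact path (Ne.symm hd₂.2) huv.symm (h ▸ d.adj)
  · exact path (Ne.symm hd₂.1) huv (h ▸ d.adj)

variable [Fintype κ] [DecidableEq V] {X : κ → Finset V}

lemma exists_notMem_inter_biUnion_nonempty (hG : G.Connected) (hX : ∀ m, (X m).Nonempty)
    (hadj : ∀ u v, G.Adj u v → ∃ m, u ∈ X m ∧ v ∈ X m) {S : Finset κ} (hS : S.Nonempty)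
    (hSuniv : S ≠ Finset.univ) : ∃ j ∉ S, (X j ∩ S.biUnion X).Nonempty := by
  obtain ⟨i, hi⟩ := hS
  obtain ⟨j, hj⟩ : ∃ j, j ∉ S := by simpa [Finset.eq_univ_iff_forall] using hSuniv
  obtain ⟨u, hu⟩ := hX i
  obtain ⟨w, hw⟩ := hX j
  by_cases hwS : w ∈ S.biUnion X
  · exact ⟨j, hj, w, Finset.mem_inter.2 ⟨hw, hwS⟩⟩
  obtain ⟨p⟩ := hG.preconnected u w
  obtain ⟨d, -, hd₁, hd₂⟩ := p.exists_boundary_dart (S.biUnion X : Finset V)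
    (Finset.mem_coe.2 (Finset.mem_biUnion.2 ⟨i, hi, hu⟩)) (by simpa using hwS)
  rw [Finset.mem_coe] at hd₁ hd₂
  obtain ⟨m, hm₁, hm₂⟩ := hadj _ _ d.adj
  exact ⟨m, fun hm => hd₂ (Finset.mem_biUnion.2 ⟨m, hm, hm₂⟩), d.fst,
    Finset.mem_inter.2 ⟨hm₁, hd₁⟩⟩

/-- Adding a block that touches the union can only increase
`∑ |X m| + 1 - |⋃ X m| - |S|`, with equality when it touches at a single vertex. This quantity is
`0` for one block and, by `hcard`, at most `0` for all of them, so it stays `0` throughout. -/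
lemma sum_card_add_one_le_card_biUnion_add_card
    (htouch : ∀ S : Finset κ, S.Nonempty → S ≠ Finset.univ →
      ∃ j ∉ S, (X j ∩ S.biUnion X).Nonempty)
    (hcard : ∑ m, (X m).card + 1 ≤ (Finset.univ.biUnion X).card + Fintype.card κ)
    {S : Finset κ} (hS : S.Nonempty) :
    ∑ m ∈ S, (X m).card + 1 ≤ (S.biUnion X).card + S.card := by
  classical
  induction S using WellFoundedGT.induction with
  | ind S ih =>
    by_cases hSu : S = Finset.univ
    · simpa [hSu] using hcard
    obtain ⟨j, hj, hne⟩ := htouch S hS hSu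
    have hle := ih (insert j S) (Finset.ssubset_insert hj) (Finset.insert_nonempty j S)
    rw [Finset.sum_insert hj, Finset.biUnion_insert, Finset.card_insert_of_notMem hj] at hle
    have hunion := Finset.card_union_add_card_inter (X j) (S.biUnion X)
    have hpos := hne.card_pos
    omega

lemma treelike_block_induction [DecidableEq κ]
    (htouch : ∀ S : Finset κ, S.Nonempty → S ≠ Finset.univ →
      ∃ j ∉ S, (X j ∩ S.biUnion X).Nonempty)
    (hcard : ∑ m, (X m).card + 1 ≤ (Finset.univ.biUnion X).card + Fintype.card κ)
    {P : Finset κ → Prop} (insert : ∀ j S v, j ∉ S → X j ∩ S.biUnion X = {v} → P S →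
      P (insert j S)) (m : κ) (singleton : P {m}) : P Finset.univ := by
  suffices h : ∀ S : Finset κ, S.Nonempty →
      (S.biUnion X).card + S.card ≤ ∑ m ∈ S, (X m).card + 1 → P S → P Finset.univ from
    h {m} (Finset.singleton_nonempty m) (by simp) singleton
  intro S
  induction S using WellFoundedGT.induction with
  | ind S ih =>
    intro hS hge hP
    by_cases hSu : S = Finset.univ
    · rwa [← hSu]
    obtain ⟨j, hj, hne⟩ := htouch S hS hSu
    have hle := sum_card_add_one_le_card_biUnion_add_card htouch hcard
      (Finset.insert_nonempty j S)
    have hunion := Finset.card_union_add_card_inter (X j) (S.biUnion X)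
    have hpos := hne.card_pos
    rw [Finset.sum_insert hj, Finset.biUnion_insert, Finset.card_insert_of_notMem hj] at hle
    obtain ⟨v, hv⟩ := Finset.card_eq_one.1 (show (X j ∩ S.biUnion X).card = 1 by omega)
    refine ih _ (Finset.ssubset_insert hj) (Finset.insert_nonempty j S) ?_
      (insert j S v hj hv hP)
    rw [Finset.sum_insert hj, Finset.biUnion_insert, Finset.card_insert_of_notMem hj]
    omega

end Graph

section Preservers

open SimpleGraph

/-- The entrywise map `f[-]` preserves positivity on `P_G(ℝ)`. The zero pattern of `f[M]` is not
constrained; it is that of `G` as soon as `f 0 = 0`. -/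
def PreservesPositivity {V : Type*} [Fintype V] (f : ℝ → ℝ) (G : SimpleGraph V) : Prop :=
  ∀ M ∈ PsetG G univ, (M.map f).PosSemidef

/-- Super-additivity on the half-line `[0, ∞)`; no condition is imposed on negative arguments. -/
def SuperadditiveOnNonneg (f : ℝ → ℝ) : Prop :=
  ∀ x y : ℝ, 0 ≤ x → 0 ≤ y → f x + f y ≤ f (x + y)

variable {V W : Type*} [Fintype V] [Fintype W] {f : ℝ → ℝ} {G G₁ G₂ : SimpleGraph V}
  {H : SimpleGraph W} {A : Matrix V V ℝ}

lemma mem_PsetG_univ :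
    A ∈ PsetG G univ ↔ A.PosSemidef ∧ ∀ i j, i ≠ j → A i j ≠ 0 → G.Adj i j := by
  simp only [PsetG, mem_ofPred_eq, mem_univ, implies_true, true_and, not_imp_comm (b := A _ _ = 0),
    ne_eq]

lemma PreservesPositivity.map_nonneg [Nonempty V] (hf : PreservesPositivity f G) {x : ℝ}
    (hx : 0 ≤ x) : 0 ≤ f x := by
  classical
  obtain ⟨v⟩ := ‹Nonempty V›
  have hmem : (diagonal fun _ => x : Matrix V V ℝ) ∈ PsetG G univ :=
    mem_PsetG_univ.2 ⟨PosSemidef.diagonal fun _ => hx,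
      fun i j hij h => absurd (diagonal_apply_ne _ hij) h⟩
  simpa using (hf _ hmem).diag_nonneg (i := v)

lemma PreservesPositivity.of_isContained (hf : PreservesPositivity f G) (h : H ⊑ G) :
    PreservesPositivity f H := by
  obtain ⟨e⟩ := h
  intro M hM
  rw [mem_PsetG_univ] at hM
  obtain ⟨A, hA, rfl, hsupp⟩ := exists_posSemidef_extension_s18 e.toEmbedding hM.1
  refine (hf A (mem_PsetG_univ.2 ⟨hA, fun i j hij hne => ?_⟩)).submatrix e
  obtain ⟨⟨x, rfl⟩, y, rfl⟩ := hsupp i j hne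
  exact e.toHom.map_adj (hM.2 x y (fun hxy => hij (congrArg _ hxy)) hne)

lemma PreservesPositivity.map [Nonempty W] (hf : PreservesPositivity f H) (hf0 : f 0 = 0)
    (e : W ↪ V) : PreservesPositivity f (H.map e) := by
  intro A hA
  rw [mem_PsetG_univ] at hA
  have hsub : A.submatrix e e ∈ PsetG H univ :=
    mem_PsetG_univ.2 ⟨hA.1.submatrix e, fun x y hxy hne =>
      map_adj_apply.1 (hA.2 _ _ (e.injective.ne hxy) hne)⟩
  obtain ⟨B, hB, hBf, hsupp⟩ := exists_posSemidef_extension_s18 e (hf _ hsub)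
  have hBe (x y) : B (e x) (e y) = f (A (e x) (e y)) := congrFun₂ hBf x y
  refine posSemidef_of_offDiag_eq_of_diag_le hB (fun i j hij => ?_) fun i => ?_
  · by_cases h : i ∈ range e ∧ j ∈ range e
    · obtain ⟨⟨x, rfl⟩, y, rfl⟩ := h
      exact (hBe x y).symm
    · have hAij : A i j = 0 := by
        by_contra hne
        obtain ⟨x, y, -, rfl, rfl⟩ := (H.map_adj e i j).1 (hA.2 i j hij hne)
        exact h ⟨mem_range_self x, mem_range_self y⟩
      rw [map_apply, hAij, hf0, not_imp_comm.1 (hsupp i j) h]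
  · by_cases h : i ∈ range e
    · obtain ⟨x, rfl⟩ := h
      exact (hBe x x).le
    · rw [not_imp_comm.1 (hsupp i i) fun h' => h h'.1]
      exact hf.map_nonneg hA.1.diag_nonneg

lemma exists_add_of_mem_PsetG_sup {v : V} (hv : G₁.support ∩ G₂.support ⊆ {v})
    (hA : A ∈ PsetG (G₁ ⊔ G₂) univ) :
    ∃ B ∈ PsetG G₁ univ, ∃ C ∈ PsetG G₂ univ, B + C = A := by
  rw [mem_PsetG_univ] at hA
  set T := G₁.support \ {v}
  obtain ⟨B, C, hB, hC, rfl, hT, hT'⟩ := exists_posSemidef_add_of_posSemidef hA.1 T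
  have symm {M : Matrix V V ℝ} (hM : M.PosSemidef) (i j) : M i j = M j i := by
    simpa using hM.isHermitian.apply j i
  have adj₁ {i j} (hij : i ≠ j) (hi : i ∈ T) (h : (B + C) i j ≠ 0) : G₁.Adj i j :=
    (hA.2 i j hij h).resolve_right fun h₂ => hi.2 (hv ⟨hi.1, (mem_support _).2 ⟨j, h₂⟩⟩)
  have B_col {i j} (h : B i j ≠ 0) : j ∈ T ∨ j = v := by
    by_contra! hj
    refine h (hT' j (fun t ht => ?_) i)
    by_contra hne
    exact hj.1 ⟨⟨t, (adj₁ (ne_of_mem_of_not_mem ht hj.1) ht hne).symm⟩, hj.2⟩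
  have B_adj {i j} (hij : i ≠ j) (hi : i ∈ T) (h : B i j ≠ 0) : G₁.Adj i j :=
    adj₁ hij hi (hT i hi j ▸ h)
  have C_row {i j} (h : C i j ≠ 0) : i ∉ T := fun hi => h (by simpa using hT i hi j)
  refine ⟨B, mem_PsetG_univ.2 ⟨hB, fun i j hij h => ?_⟩, C,
    mem_PsetG_univ.2 ⟨hC, fun i j hij h => ?_⟩, rfl⟩
  · rcases B_col h with hj | rfl
    · exact (B_adj hij.symm hj (symm hB i j ▸ h)).symm
    · exact B_adj hij ((B_col (symm hB i j ▸ h)).resolve_right hij) h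
  · have hi : i ∉ T := C_row h
    have hj : j ∉ T := C_row (symm hC i j ▸ h)
    have hBij : B i j = 0 := by
      by_contra hne
      exact hij (((B_col (symm hB i j ▸ hne)).resolve_left hi).trans
        ((B_col hne).resolve_left hj).symm)
    refine (hA.2 i j hij (by simpa [hBij] using h)).resolve_left fun h₁ => hij ?_
    exact (not_not.1 fun hiv => hi ⟨⟨j, h₁⟩, hiv⟩ : i = v).trans
      (not_not.1 fun hjv => hj ⟨⟨i, h₁.symm⟩, hjv⟩ : j = v).symm

lemma PreservesPositivity.sup (hsuper : SuperadditiveOnNonneg f) (hf0 : f 0 = 0)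
    (h₁ : PreservesPositivity f G₁) (h₂ : PreservesPositivity f G₂) {v : V}
    (hv : G₁.support ∩ G₂.support ⊆ {v}) : PreservesPositivity f (G₁ ⊔ G₂) := by
  intro A hA
  obtain ⟨B, hB, C, hC, rfl⟩ := exists_add_of_mem_PsetG_sup hv hA
  refine posSemidef_of_offDiag_eq_of_diag_le ((h₁ B hB).add (h₂ C hC)) (fun i j hij => ?_)
    fun i => hsuper _ _ (mem_PsetG_univ.1 hB).1.diag_nonneg (mem_PsetG_univ.1 hC).1.diag_nonneg
  have hzero : B i j = 0 ∨ C i j = 0 := by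
    by_contra! h
    have adj₁ := (mem_PsetG_univ.1 hB).2 i j hij h.1
    have adj₂ := (mem_PsetG_univ.1 hC).2 i j hij h.2
    exact hij ((hv ⟨⟨j, adj₁⟩, ⟨j, adj₂⟩⟩).trans (hv ⟨⟨i, adj₁.symm⟩, ⟨i, adj₂.symm⟩⟩).symm)
  rcases hzero with h | h <;> simp [h, hf0]

lemma PreservesPositivity.superadditiveOnNonneg (hf : PreservesPositivity f (pathGraph 3))
    (hf0 : f 0 = 0) : SuperadditiveOnNonneg f := by
  intro x y hx hy
  let M : Matrix (Fin 3) (Fin 3) ℝ :=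
    x • vecMulVec ![1, 1, 0] (star ![1, 1, 0]) + y • vecMulVec ![0, 1, 1] (star ![0, 1, 1])
  have hM : M ∈ PsetG (pathGraph 3) univ := by
    refine mem_PsetG_univ.2 ⟨((posSemidef_vecMulVec_self_star _).smul hx).add
      ((posSemidef_vecMulVec_self_star _).smul hy), fun i j hij h => ?_⟩
    fin_cases i <;> fin_cases j <;> simp_all [M, vecMulVec, pathGraph_adj]
  have htest := (hf M hM).dotProduct_mulVec_nonneg ![1, -1, 1]
  simp [M, vecMulVec, mulVec, dotProduct, Fin.sum_univ_three, hf0] at htest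
  linarith

lemma PreservesPositivity.sq_map_mul_le (hf : PreservesPositivity f (pathGraph 2)) (s t : ℝ) :
    f (s * t) ^ 2 ≤ f (s ^ 2) * f (t ^ 2) := by
  have hM : vecMulVec ![s, t] (star ![s, t]) ∈ PsetG (pathGraph 2) univ :=
    mem_PsetG_univ.2 ⟨posSemidef_vecMulVec_self_star _, fun i j hij _ => by
      simpa [pathGraph_two_eq_top] using hij⟩
  have hdet := (hf _ hM).det_nonneg
  have hentries : (vecMulVec ![s, t] (star ![s, t])).map f =
      !![f (s ^ 2), f (s * t); f (s * t), f (t ^ 2)] := by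
    ext i j
    fin_cases i <;> fin_cases j <;> simp [vecMulVec, sq, mul_comm]
  rw [hentries, det_fin_two_of] at hdet
  linarith [sq (f (s * t))]

end Preservers

section Continuity

variable {f g : ℝ → ℝ} {x : ℝ}

lemma SuperadditiveOnNonneg.monotoneOn (hf : SuperadditiveOnNonneg f)
    (hnonneg : ∀ x, 0 ≤ x → 0 ≤ f x) : MonotoneOn f (Ici 0) := by
  intro x hx y _ hxy
  have hadd := hf x (y - x) hx (sub_nonneg.2 hxy)
  rw [add_sub_cancel] at hadd
  linarith [hnonneg (y - x) (sub_nonneg.2 hxy)]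

lemma continuousAt_of_monotone_of_rightLim_le_leftLim (hg : Monotone g)
    (h : Function.rightLim g x ≤ Function.leftLim g x) : ContinuousAt g x :=
  hg.continuousAt_iff_leftLim_eq_rightLim.2 ((hg.leftLim_le_rightLim le_rfl).antisymm h)

lemma continuousAt_zero_of_two_mul_map_le (hg : Monotone g) (hnonneg : ∀ x, 0 ≤ g x)
    (hdouble : ∀ x, 0 < x → 2 * g x ≤ g (2 * x)) : ContinuousAt g 0 := by
  have hR : 2 * Function.rightLim g 0 ≤ Function.rightLim g 0 := by
    refine ge_of_tendsto (hg.tendsto_rightLim 0)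
      (Filter.eventually_of_mem self_mem_nhdsWithin fun b (hb : 0 < b) => ?_)
    calc 2 * Function.rightLim g 0 ≤ 2 * g (b / 2) := by
          gcongr
          exact hg.rightLim_le (half_pos hb)
      _ ≤ g (2 * (b / 2)) := hdouble _ (half_pos hb)
      _ = g b := by rw [mul_div_cancel₀ b two_ne_zero]
  have hL : 0 ≤ Function.leftLim g 0 := (hnonneg (-1)).trans (hg.le_leftLim neg_one_lt_zero)
  exact continuousAt_of_monotone_of_rightLim_le_leftLim hg (by linarith)

lemma continuousAt_of_sq_map_mul_le (hg : Monotone g) (hnonneg : ∀ x, 0 ≤ g x)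
    (hsq : ∀ s t, 0 ≤ s → 0 ≤ t → g (s * t) ^ 2 ≤ g (s ^ 2) * g (t ^ 2)) (hx : 0 < x) :
    ContinuousAt g x := by
  set L := Function.leftLim g x
  set R := Function.rightLim g x
  have hL : 0 ≤ L := (hnonneg (x - 1)).trans (hg.le_leftLim (sub_one_lt x))
  have hLR : L ≤ R := hg.leftLim_le_rightLim le_rfl
  have hRL : R ^ 2 ≤ L * R := by
    refine ge_of_tendsto ((hg.tendsto_rightLim x).const_mul L)
      (Filter.eventually_of_mem self_mem_nhdsWithin fun b (hb : x < b) => ?_)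
    have hb0 : 0 < b := hx.trans hb
    obtain ⟨a, hxa, hax⟩ : ∃ a, x ^ 2 / b < a ∧ a < x :=
      exists_between ((div_lt_iff₀ hb0).2 (by nlinarith))
    have ha0 : 0 < a := lt_trans (by positivity) hxa
    have hxab : x < √a * √b := by
      rw [← Real.sqrt_mul ha0.le]
      exact Real.lt_sqrt_of_sq_lt ((div_lt_iff₀ hb0).1 hxa)
    calc R ^ 2 ≤ g (√a * √b) ^ 2 := by
          gcongr
          exacts [hL.trans hLR, hg.rightLim_le hxab]
      _ ≤ g (√a ^ 2) * g (√b ^ 2) := hsq _ _ (Real.sqrt_nonneg a) (Real.sqrt_nonneg b)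
      _ = g a * g b := by rw [Real.sq_sqrt ha0.le, Real.sq_sqrt hb0.le]
      _ ≤ L * g b := by
          gcongr
          exacts [hnonneg b, hg.le_leftLim hax]
  refine continuousAt_of_monotone_of_rightLim_le_leftLim hg ?_
  by_contra! hlt
  nlinarith

lemma SuperadditiveOnNonneg.continuousOn_Ici (hf : SuperadditiveOnNonneg f)
    (hnonneg : ∀ x, 0 ≤ x → 0 ≤ f x)
    (hsq : ∀ s t, 0 ≤ s → 0 ≤ t → f (s * t) ^ 2 ≤ f (s ^ 2) * f (t ^ 2)) :
    ContinuousOn f (Ici 0) := by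
  let g : ℝ → ℝ := fun x => f (max x 0)
  have hgf {x} (hx : 0 ≤ x) : g x = f x := by simp [g, hx]
  have hg : Monotone g := fun x y hxy =>
    hf.monotoneOn hnonneg (le_max_right x 0) (le_max_right y 0) (max_le_max_right 0 hxy)
  have hg0 : ∀ x, 0 ≤ g x := fun x => hnonneg _ (le_max_right x 0)
  intro x hx
  suffices hgx : ContinuousAt g x from
    hgx.continuousWithinAt.congr (fun y hy => (hgf hy).symm) (hgf hx).symm
  rcases (mem_Ici.1 hx).eq_or_lt with rfl | hx
  · refine continuousAt_zero_of_two_mul_map_le hg hg0 fun x hx => ?_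
    rw [hgf hx.le, hgf (by positivity), two_mul, two_mul]
    exact hf x x hx.le hx.le
  · refine continuousAt_of_sq_map_mul_le hg hg0 (fun s t hs ht => ?_) hx
    rw [hgf (mul_nonneg hs ht), hgf (sq_nonneg s), hgf (sq_nonneg t)]
    exact hsq s t hs ht

end Continuity

section Coalescence

open SimpleGraph

/-- `G` is a coalescence of the graphs `Gs i`, placed in `G` by the embeddings `ι i`. In a
connected union of `|κ|` blocks, `|V| = ∑ |W i| - (|κ| - 1)` says that each block after the
first, in a suitable order, is attached at exactly one vertex; this count encodes the tree-like
gluing. -/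
structure IsCoalescence {κ V : Type*} [Fintype κ] [Fintype V] {W : κ → Type*}
    [∀ i, Fintype (W i)] (Gs : ∀ i, SimpleGraph (W i)) (ι : ∀ i, W i ↪ V)
    (G : SimpleGraph V) : Prop where
  cover : ∀ v, ∃ i x, ι i x = v
  adj_iff : ∀ u v, G.Adj u v ↔ ∃ i x y, (Gs i).Adj x y ∧ ι i x = u ∧ ι i y = v
  connected : G.Connected
  card : Fintype.card V + Fintype.card κ = ∑ i, Fintype.card (W i) + 1

variable {κ V : Type*} [Fintype κ] [Fintype V] {W : κ → Type*} [∀ i, Fintype (W i)]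
  {Gs : ∀ i, SimpleGraph (W i)} {ι : ∀ i, W i ↪ V} {G : SimpleGraph V} {f : ℝ → ℝ}

namespace IsCoalescence

lemma eq_iSup_map (h : IsCoalescence Gs ι G) : G = ⨆ i, (Gs i).map (ι i) := by
  ext u v
  simp [h.adj_iff, map_adj]

lemma isContained (h : IsCoalescence Gs ι G) (i : κ) : Gs i ⊑ G :=
  ⟨⟨⟨ι i, fun {x y} hxy => (h.adj_iff _ _).2 ⟨i, x, y, hxy, rfl, rfl⟩⟩, (ι i).injective⟩⟩

lemma two_lt_card [Nontrivial κ] [∀ i, Nontrivial (W i)] (h : IsCoalescence Gs ι G) :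
    2 < Fintype.card V := by
  have hκ : 1 < Fintype.card κ := Fintype.one_lt_card
  have hW : Fintype.card κ * 2 ≤ ∑ i, Fintype.card (W i) :=
    Finset.card_nsmul_le_sum _ _ 2 fun i _ => Fintype.one_lt_card
  have hcard := h.card
  omega

lemma block_induction [DecidableEq κ] [DecidableEq V] [∀ i, Nonempty (W i)]
    (h : IsCoalescence Gs ι G) {P : Finset κ → Prop} (singleton : ∀ i, P {i})
    (insert : ∀ j S v, j ∉ S →
      Finset.univ.map (ι j) ∩ S.biUnion (fun i => Finset.univ.map (ι i)) = {v} →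
      P S → P (insert j S)) : P Finset.univ := by
  let X (i : κ) : Finset V := Finset.univ.map (ι i)
  obtain ⟨v⟩ := h.connected.nonempty
  obtain ⟨i, -⟩ := h.cover v
  refine treelike_block_induction (X := X) (fun S hS hSuniv => ?_) ?_ insert i (singleton i)
  · refine exists_notMem_inter_biUnion_nonempty h.connected (fun i => by simp [X])
      (fun u v huv => ?_) hS hSuniv
    obtain ⟨i, x, y, -, rfl, rfl⟩ := (h.adj_iff u v).1 huv
    exact ⟨i, by simp [X], by simp [X]⟩
  · have hX : Finset.univ.biUnion X = Finset.univ :=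
      Finset.eq_univ_of_forall fun v => by simpa [X] using h.cover v
    simp [hX, X, h.card]

lemma preservesPositivity [∀ i, Nonempty (W i)] (h : IsCoalescence Gs ι G) (hf0 : f 0 = 0)
    (hf : ∀ i, PreservesPositivity f (Gs i)) (hsuper : SuperadditiveOnNonneg f) :
    PreservesPositivity f G := by
  classical
  have hsupp {i u} (hu : u ∈ ((Gs i).map (ι i)).support) : u ∈ Finset.univ.map (ι i) := by
    obtain ⟨_, _, x, _, -, rfl, rfl⟩ := hu
    simp
  suffices hsup : PreservesPositivity f (⨆ i ∈ (Finset.univ : Finset κ), (Gs i).map (ι i)) by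
    simpa [h.eq_iSup_map] using hsup
  refine h.block_induction (P := fun S => PreservesPositivity f (⨆ i ∈ S, (Gs i).map (ι i)))
    (fun i => by simpa using (hf i).map hf0 (ι i)) fun j S v _ hjv hS => ?_
  rw [Finset.iSup_insert]
  refine ((hf j).map hf0 (ι j)).sup hsuper hf0 hS (v := v) ?_
  rintro u ⟨huj, w, huw⟩
  simp only [iSup_adj, exists_prop] at huw
  obtain ⟨i, hi, huw⟩ := huw
  rw [mem_singleton_iff, ← Finset.mem_singleton, ← hjv, Finset.mem_inter, Finset.mem_biUnion]
  exact ⟨hsupp huj, i, hi, hsupp ⟨w, huw⟩⟩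

theorem preservesPositivity_iff [∀ i, Nonempty (W i)] (h : IsCoalescence Gs ι G)
    (hV : 2 < Fintype.card V) (hf0 : f 0 = 0) :
    PreservesPositivity f G ↔ (∀ i, PreservesPositivity f (Gs i)) ∧
      ContinuousOn f (Ici 0) ∧ SuperadditiveOnNonneg f := by
  refine ⟨fun hf => ?_, fun ⟨hf, _, hsuper⟩ => h.preservesPositivity hf0 hf hsuper⟩
  have hpath : PreservesPositivity f (pathGraph 3) :=
    hf.of_isContained (pathGraph_three_isContained h.connected hV)
  have hedge : PreservesPositivity f (pathGraph 2) :=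
    hpath.of_isContained (pathGraph_two_embedding 3 (by simp)).isContained
  have hsuper : SuperadditiveOnNonneg f := hpath.superadditiveOnNonneg hf0
  exact ⟨fun i => hf.of_isContained (h.isContained i),
    hsuper.continuousOn_Ici (fun _ => hpath.map_nonneg) fun s t _ _ => hedge.sq_map_mul_le s t,
    hsuper⟩

end IsCoalescence

end Coalescence

section Powers

lemma map_mem_PsetG_iff {V : Type*} [Fintype V] {G : SimpleGraph V} {f : ℝ → ℝ}
    (hf0 : f 0 = 0) :
    (∀ A ∈ PsetG G univ, A.map f ∈ PsetG G univ) ↔ PreservesPositivity f G := by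
  refine forall₂_congr fun A hA => ⟨fun h => h.1, fun h => ⟨h, fun _ _ => mem_univ _, ?_⟩⟩
  intro i j hij hadj
  rw [map_apply, hA.2.2 i j hij hadj, hf0]

lemma continuousOn_and_superadditiveOnNonneg_iff_one_le {f : ℝ → ℝ} {α : ℝ} (hf0 : f 0 = 0)
    (hf : ∀ x, 0 < x → f x = x ^ α) :
    ContinuousOn f (Ici 0) ∧ SuperadditiveOnNonneg f ↔ 1 ≤ α := by
  constructor
  · rintro ⟨-, hsuper⟩
    have h11 := hsuper 1 1 zero_le_one zero_le_one
    rw [hf 1 one_pos, hf _ (by norm_num), Real.one_rpow, one_add_one_eq_two] at h11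
    refine (Real.rpow_le_rpow_left_iff one_lt_two).1 ?_
    rwa [Real.rpow_one]
  · intro hα
    have hα0 : 0 < α := one_pos.trans_le hα
    have hpow {x} (hx : 0 ≤ x) : f x = x ^ α := by
      rcases hx.eq_or_lt with rfl | hx
      · rw [hf0, Real.zero_rpow hα0.ne']
      · exact hf x hx
    refine ⟨(Real.continuous_rpow_const hα0.le).continuousOn.congr fun x hx => hpow hx,
      fun x y hx hy => ?_⟩
    rw [hpow hx, hpow hy, hpow (add_nonneg hx hy)]
    exact Real.add_rpow_le_rpow_add hx hy hα

lemma IsCoalescence.setOf_preserving_powers_eq {κ V : Type*} [Fintype κ] [Fintype V]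
    {W : κ → Type*} [∀ i, Fintype (W i)] [∀ i, Nonempty (W i)] {Gs : ∀ i, SimpleGraph (W i)}
    {ι : ∀ i, W i ↪ V} {G : SimpleGraph V} (h : IsCoalescence Gs ι G)
    (hV : 2 < Fintype.card V) {F : ℝ → ℝ → ℝ} (hF0 : ∀ α, F α 0 = 0)
    (hF : ∀ α x, 0 < x → F α x = x ^ α) :
    {α | ∀ A ∈ PsetG G univ, A.map (F α) ∈ PsetG G univ} =
      Ici 1 ∩ ⋂ i, {α | ∀ A ∈ PsetG (Gs i) univ, A.map (F α) ∈ PsetG (Gs i) univ} := by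
  ext α
  simp only [mem_ofPred_eq, mem_inter_iff, mem_iInter, mem_Ici, map_mem_PsetG_iff (hF0 α),
    h.preservesPositivity_iff hV (hF0 α),
    continuousOn_and_superadditiveOnNonneg_iff_one_le (hF0 α) (hF α)]
  exact and_comm

lemma psiF_zero (α : ℝ) : psiF α 0 = 0 := by simp [psiF]

lemma phiF_zero (α : ℝ) : phiF α 0 = 0 := if_pos rfl

lemma psiF_of_pos (α x : ℝ) (hx : 0 < x) : psiF α x = x ^ α := by
  simp [psiF, Real.sign_of_pos hx, abs_of_pos hx]

lemma phiF_of_pos (α x : ℝ) (hx : 0 < x) : phiF α x = x ^ α := by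
  simp [phiF, hx.ne', abs_of_pos hx]

end Powers

/-- **Proposition 4.11 (coalescences)**: let `G` be a coalescence of connected graphs
`G_1, …, G_k` (`k > 1`), each with at least one edge: `G` is covered by embedded copies of the
`G_i` whose edges are exactly the edges of `G`, any two copies share at most one vertex, `G`
is connected, and `|V(G)| = Σ|V(G_i)| − (k−1)` (so the copies are glued in a tree-like
fashion at single vertices). For `f : ℝ → ℝ` with `f(0) = 0`, `f[−]` preserves positivity on
`P_G(ℝ)` iff it does so on each `P_{G_i}(ℝ)` and `f` is continuous and super-additive on
`[0,∞)`. In particular `H_G^ψ = [1,∞) ∩ ⋂ᵢ H_{G_i}^ψ` and `H_G^φ = [1,∞) ∩ ⋂ᵢ H_{G_i}^φ`. -/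
theorem coalescence_preserves_positivity_iff {k : ℕ} (hk : 1 < k)
    {W : Fin k → Type} [∀ i, Fintype (W i)] [∀ i, DecidableEq (W i)]
    (Gs : ∀ i, SimpleGraph (W i))
    (hconn : ∀ i, (Gs i).Connected) (hedge : ∀ i, ∃ x y, (Gs i).Adj x y)
    {V : Type} [Fintype V] [DecidableEq V] (G : SimpleGraph V)
    (ι : ∀ i, W i ↪ V)
    (hcover : ∀ v : V, ∃ i x, ι i x = v)
    (hadj : ∀ u v : V, G.Adj u v ↔ ∃ i x y, (Gs i).Adj x y ∧ ι i x = u ∧ ι i y = v)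
    (hglue : ∀ i j, i ≠ j → (Set.range (ι i) ∩ Set.range (ι j)).ncard ≤ 1)
    (hGconn : G.Connected)
    (hcard : Fintype.card V + (k - 1) = ∑ i, Fintype.card (W i))
    (f : ℝ → ℝ) (hf0 : f 0 = 0) :
    ((∀ M ∈ PsetG G univ, (M.map f).PosSemidef) ↔
      ((∀ i, ∀ M ∈ PsetG (Gs i) univ, (M.map f).PosSemidef) ∧
       ContinuousOn f (Ici (0 : ℝ)) ∧
       ∀ x y : ℝ, 0 ≤ x → 0 ≤ y → f x + f y ≤ f (x + y))) ∧
    (HsetPsi G = Ici (1 : ℝ) ∩ ⋂ i, HsetPsi (Gs i)) ∧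
    (HsetPhi G = Ici (1 : ℝ) ∩ ⋂ i, HsetPhi (Gs i)) := by
  have : Nontrivial (Fin k) := Fin.nontrivial_iff_two_le.2 hk
  have (i : Fin k) : Nontrivial (W i) := nontrivial_of_ne _ _ (hedge i).choose_spec.choose_spec.ne
  have hG : IsCoalescence Gs ι G :=
    { cover := hcover
      adj_iff := hadj
      connected := hGconn
      card := by rw [← hcard, Fintype.card_fin]; omega }
  exact ⟨hG.preservesPositivity_iff hG.two_lt_card hf0,
    hG.setOf_preserving_powers_eq hG.two_lt_card psiF_zero psiF_of_pos,
    hG.setOf_preserving_powers_eq hG.two_lt_card phiF_zero phiF_of_pos⟩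
end
end
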